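/- arXiv:2009.14382 — 3 statements merged into one kernel-verified Lean document; each statement's English description precedes it below -/
import Mathlib

section
/- Let F be a field and let (a_n)_{n≥0} be a rational sequence with values in F. Then for all integers i ≥ 0 and r ≥ 1, the subsequence (a_{i+nr})_{n≥0} is again a rational sequence with values in F. -/
/-!
If `g * A = f` with `A = ∑ aₙ xⁿ`, then `g` divides some nonzero polynomial of the form `h(x^r)`,
because the class of `x^r` in the finite-dimensional algebra `F[x]/(g)` is algebraic over `F`
(`exists_dvd_expand`). Hence `h(x^r) * A` is a polynomial. Up to finitely many terms, its
coefficients in degrees `i + n r` are the coefficients of `h * B` with `B = ∑ a_{i+nr} xⁿ`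
(`coeff_expand_mul_eventually`), so `h * B` has only finitely many nonzero coefficients.
-/

/-- A sequence `a : ℕ → F` is a *rational sequence* if there are polynomials
`f, g ∈ F[x]` with `g ≠ 0` such that `g(x) * ∑ aₙ xⁿ = f(x)` as formal power series. -/
def IsRationalSeq {F : Type*} [Field F] (a : ℕ → F) : Prop :=
  ∃ f g : Polynomial F, g ≠ 0 ∧
    (g : PowerSeries F) * PowerSeries.mk a = (f : PowerSeries F)

/-- Every nonzero polynomial divides a nonzero polynomial in `x^r`. -/
lemma exists_dvd_expand {F : Type*} [Field F] {g : Polynomial F} (hg : g ≠ 0) (r : ℕ) :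
    ∃ h : Polynomial F, h ≠ 0 ∧ g ∣ Polynomial.expand F r h := by
  have : FiniteDimensional F (AdjoinRoot g) := (AdjoinRoot.powerBasis hg).finite
  obtain ⟨h, h0, hh⟩ := Algebra.IsAlgebraic.isAlgebraic (R := F) (AdjoinRoot.root g ^ r)
  refine ⟨h, h0, ?_⟩
  rw [← AdjoinRoot.mk_eq_zero, ← AdjoinRoot.aeval_eq, Polynomial.expand_aeval]
  exact hh

/-- The identity can fail for `n < deg h`: there the left side may also involve terms `a m`
with `m < i` that do not belong to the subsequence. -/
lemma coeff_expand_mul_eventually {F : Type*} [Field F] (a : ℕ → F) (i r : ℕ)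
    (h : Polynomial F) :
    ∃ N, ∀ n ≥ N,
      PowerSeries.coeff (i + n * r)
        ((Polynomial.expand F r h : Polynomial F) * PowerSeries.mk a : PowerSeries F) =
      PowerSeries.coeff n
        ((h : PowerSeries F) * PowerSeries.mk (fun n => a (i + n * r))) := by
  induction h using Polynomial.induction_on' with
  | add p q hp hq =>
    obtain ⟨N, hN⟩ := hp
    obtain ⟨M, hM⟩ := hq
    refine ⟨max N M, fun n hn => ?_⟩
    simp only [map_add, Polynomial.coe_add, add_mul]
    rw [hN n (le_of_max_le_left hn), hM n (le_of_max_le_right hn)]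
  | monomial j c =>
    refine ⟨j, fun n hn => ?_⟩
    obtain ⟨k, rfl⟩ := Nat.exists_eq_add_of_le hn
    have e : i + (j + k) * r = (i + k * r) + j * r := by ring
    rw [Polynomial.expand_monomial, e, add_comm j k,
      ← Polynomial.C_mul_X_pow_eq_monomial, ← Polynomial.C_mul_X_pow_eq_monomial]
    simp only [Polynomial.coe_mul, Polynomial.coe_C, Polynomial.coe_pow, Polynomial.coe_X,
      mul_assoc, PowerSeries.coeff_C_mul, PowerSeries.coeff_X_pow_mul, PowerSeries.coeff_mk]

/-- Any arithmetic-progression subsequence `(a_{i+nr})ₙ` of a rational sequence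
is again a rational sequence. -/
theorem subsequence_rational {F : Type*} [Field F] (a : ℕ → F)
    (ha : IsRationalSeq a) (i r : ℕ) (hr : 1 ≤ r) :
    IsRationalSeq (fun n => a (i + n * r)) := by
  obtain ⟨f, g, hg, hfg⟩ := ha
  obtain ⟨h, h0, k, hk⟩ := exists_dvd_expand hg r
  obtain ⟨N, hN⟩ := coeff_expand_mul_eventually a i r h
  have hp : ((Polynomial.expand F r h : Polynomial F) * PowerSeries.mk a : PowerSeries F) =
      ((k * f : Polynomial F) : PowerSeries F) := by
    rw [hk, Polynomial.coe_mul, Polynomial.coe_mul, ← hfg]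
    ring
  -- Beyond this bound, `n ≥ N` and `i + n * r > deg (k * f)`, the latter because `r ≥ 1`.
  refine ⟨PowerSeries.trunc (max N ((k * f).natDegree + 1))
    ((h : PowerSeries F) * PowerSeries.mk (fun n => a (i + n * r))), h, h0, ?_⟩
  ext n
  rw [Polynomial.coeff_coe, PowerSeries.coeff_trunc]
  split_ifs with hn
  · rfl
  · rw [not_lt, max_le_iff] at hn
    rw [← hN n hn.1, hp, Polynomial.coeff_coe]
    apply Polynomial.coeff_eq_zero_of_natDegree_lt
    nlinarith [hn.2]
end

section
/- Let p be an odd prime, let ζ_p ∈ ℂ be a primitive p-th root of unity, let n ≥ 1, and let f ∈ F_p[x_1, …, x_n] be a polynomial. For each k ≥ 1, let S_k(f) = ∑_{(x_1,…,x_n) ∈ (F_{p^k})^n} ζ_p^{Tr_k(f(x_1,…,x_n))} ∈ ℂ, where F_{p^k} is the finite field with p^k elements and Tr_k : F_{p^k} → F_p is the absolute trace map. Then the degree sequence (deg S_k(f))_{k≥1}, where deg S_k(f) = [ℚ(S_k(f)) : ℚ], is virtually periodic in k: there exist positive integers N and r such that deg S_{k+r}(f) = deg S_k(f) for all k > N.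 -/
/-!
The sums `S_k` are the images, under the character `g ↦ ζ`, of universal sums
`s_k = ∑_x g ^ Tr(f(x))` in the group ring `ℤ[ℤ/p]`.  The degree of `S_k` is determined by the
stabiliser of `s_k` under the action of `(ℤ/p)ˣ` on the coefficients (`finrank_adjoin_chi_eq`),
that is, by which of the integers `s_k(a t) - s_k(t)` vanish.  Once `k ↦ s_k` is known to satisfy
a linear recurrence, each of these integer sequences does too, and the Skolem–Mahler–Lech theorem
(`skolem_mahler_lech`) shows that its zero set is eventually periodic; a common period for the
finitely many pairs `(a, t)` is a period of the degrees (`degree_periodic_of_hankel`).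

The recurrence is the rationality of the L-function of `f`.  By Kronecker's criterion
(`isRec_of_hankel`) it suffices that the Hankel determinants of `(s_k)` vanish from some size `m` on
(`hankel_expSeq_eq_zero`).  Their coefficients are integers of size `p ^ O(m ^ 2)`, with a constant
depending on `n` only, so it suffices to show that they are divisible by a power of `p` with
exponent at least `C m ^ 2 - O(m)` for a sufficiently large `C`.

This is a form of Dwork's argument, carried out modulo a large power `p ^ M`, in the group ring `R`
of `ℤ/p` over the Witt vectors of an algebraic closure of `𝔽_p`, with `π = 1 - g` in the role of
the uniformiser (`p ∣ π ^ p`).  A polynomial `Θ` over `R`, with `i`-th coefficient divisible by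
`π ^ i`, splits the additive character modulo `p ^ M`: the product of the values of `Θ` at the
Teichmüller points `τ(x) ^ (p ^ i)` is congruent to `g ^ Tr(x)` (`exists_splitting`).  It is a finite
product of factors `(1 - t ^ l X ^ N) ^ e` at `X = π`, with `N e ≡ μ(l)`, which approximates
`(1 - X) ^ t` after multiplication over the Frobenius orbit of `t`.  With
`F = ∏ Θ(τ(c_w) x ^ w)`, the sum `s_k` is congruent to the sum of `F(x) F(x^p) ⋯ F(x^{p^{k-1}})` over
the Teichmüller points, which by the Dwork trace formula (`sum_eval_frobProd`) is a combination of
traces of `k`-th powers of finite matrices.  The divisibility of the coefficients of `F` makes the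
coefficients of `det(1 - T A)` divisible by `π ^ (c j - b)` for every `c`, where `b` depends on `c`
but not on `M`; hence the required divisibility of the Hankel determinants
(`Decay.dvd_hankel_det`).
-/

/-! ### Hankel determinants and linear recurrences -/

namespace ExpSumDegree

/-- The `m × m` Hankel matrix `(a (s + i + j))` of a sequence `a`, with offset `s`. -/
def hankel {R : Type*} (a : ℕ → R) (s m : ℕ) : Matrix (Fin m) (Fin m) R :=
  Matrix.of fun i j => a (s + i + j)

section Hankel

variable {K : Type*} [Field K]

lemma hankel_kernel {a : ℕ → K} {s m : ℕ} (h : (hankel a s m).det ≠ 0) {c : Fin m → K}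
    (hc : ∀ j < m, ∑ i : Fin m, c i * a (s + i + j) = 0) : c = 0 := by
  by_contra hne
  apply h
  rw [← Matrix.exists_vecMul_eq_zero_iff]
  refine ⟨c, hne, ?_⟩
  ext j
  simpa [Matrix.vecMul, dotProduct, hankel] using hc j j.2

lemma exists_hankel_relation {a : ℕ → K} {s m : ℕ} (h : (hankel a s m).det = 0) :
    ∃ c : Fin m → K, c ≠ 0 ∧ ∀ j < m, ∑ i : Fin m, c i * a (s + i + j) = 0 := by
  rw [← Matrix.exists_vecMul_eq_zero_iff] at h
  obtain ⟨c, hc, h⟩ := h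
  refine ⟨c, hc, fun j hj => ?_⟩
  simpa [Matrix.vecMul, dotProduct, hankel] using congrFun h ⟨j, hj⟩

/-- If the determinant of size `m` at offset `s + 1` is nonzero, a relation between the rows
`0, …, m` of the first `m` columns of the Hankel array at `s` is determined by its coefficient of
index `0`. -/
lemma hankel_kernel_of_zero {a : ℕ → K} {s m : ℕ} (h : (hankel a (s + 1) m).det ≠ 0)
    {c : Fin (m + 1) → K} (h0 : c 0 = 0)
    (hc : ∀ j < m, ∑ i : Fin (m + 1), c i * a (s + i + j) = 0) : c = 0 := by
  have h1 : (fun i : Fin m => c i.succ) = 0 := by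
    apply hankel_kernel h
    intro j hj
    have := hc j hj
    rw [Fin.sum_univ_succ, h0, zero_mul, zero_add] at this
    rw [← this]
    refine Finset.sum_congr rfl fun i _ => ?_
    rw [Fin.val_succ]
    congr 2
    ring
  ext i
  refine Fin.cases h0 (fun i => ?_) i
  exact congrFun h1 i

lemma hankel_kernel_of_last {a : ℕ → K} {s m : ℕ} (h : (hankel a s m).det ≠ 0)
    {c : Fin (m + 1) → K} (h0 : c (Fin.last m) = 0)
    (hc : ∀ j < m, ∑ i : Fin (m + 1), c i * a (s + i + j) = 0) : c = 0 := by
  have h1 : (fun i : Fin m => c i.castSucc) = 0 := by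
    apply hankel_kernel h
    intro j hj
    have := hc j hj
    rw [Fin.sum_univ_castSucc, h0, zero_mul, add_zero] at this
    simpa using this
  ext i
  refine Fin.lastCases h0 (fun i => ?_) i
  exact congrFun h1 i

/-- The step of Kronecker's criterion: two vanishing Hankel determinants at offset `s`
force one at offset `s + 1`. -/
lemma hankel_step {a : ℕ → K} {s m : ℕ} (h1 : (hankel a s (m + 1)).det = 0)
    (h2 : (hankel a s m).det = 0) : (hankel a (s + 1) m).det = 0 := by
  by_contra h
  obtain ⟨c, hc0, hc⟩ := exists_hankel_relation h1
  obtain ⟨e, he0, he⟩ := exists_hankel_relation h2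
  set e' : Fin (m + 1) → K := Fin.snoc (α := fun _ => K) e 0 with he'
  have hlast : e' (Fin.last m) = 0 := by simp [e']
  have he1 : ∀ j < m, ∑ i : Fin (m + 1), e' i * a (s + i + j) = 0 := by
    intro j hj
    rw [Fin.sum_univ_castSucc, hlast, zero_mul, add_zero]
    simpa [e'] using he j hj
  have hne : e' ≠ 0 := by
    intro h0
    apply he0
    ext i
    have := congrFun h0 i.castSucc
    simpa [e'] using this
  have hez : e' 0 ≠ 0 := fun h0 => hne (hankel_kernel_of_zero h h0 he1)
  have hcomb : (fun i => e' 0 * c i - c 0 * e' i) = 0 := by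
    apply hankel_kernel_of_zero h
    · ring
    · intro j hj
      have e1 := hc j (by omega)
      have e2 := he1 j hj
      calc _ = e' 0 * ∑ i : Fin (m + 1), c i * a (s + i + j)
            - c 0 * ∑ i : Fin (m + 1), e' i * a (s + i + j) := by
              rw [Finset.mul_sum, Finset.mul_sum, ← Finset.sum_sub_distrib]
              exact Finset.sum_congr rfl fun i _ => by ring
        _ = 0 := by rw [e1, e2]; ring
  have hcm : c (Fin.last m) = 0 := by
    have := congrFun hcomb (Fin.last m)
    simp only [hlast, mul_zero, sub_zero, Pi.zero_apply, mul_eq_zero] at this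
    tauto
  apply hc0
  apply hankel_kernel_of_last h hcm
  intro j hj
  rw [← hc (j + 1) (by omega)]
  refine Finset.sum_congr rfl fun i _ => ?_
  congr 2
  ring

lemma hankel_det_eq_zero_of_offset {a : ℕ → K} {s₀ m₀ : ℕ}
    (h : ∀ m ≥ m₀, (hankel a s₀ m).det = 0) (s m : ℕ) (hs : s₀ ≤ s) (hm : m₀ ≤ m) :
    (hankel a s m).det = 0 := by
  induction s, hs using Nat.le_induction generalizing m with
  | base => exact h m hm
  | succ s _ ih => exact hankel_step (ih (m + 1) (by omega)) (ih m hm)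

/-- Kronecker's criterion: vanishing Hankel determinants of a fixed size give a linear
recurrence with nonzero extreme coefficients. -/
lemma exists_recurrence_of_hankel {a : ℕ → K} (m s₀ : ℕ)
    (h : ∀ s ≥ s₀, (hankel a s m).det = 0) :
    ∃ (d s₁ : ℕ) (c : ℕ → K), c 0 ≠ 0 ∧ c d ≠ 0 ∧
      ∀ s ≥ s₁, ∑ i ∈ Finset.range (d + 1), c i * a (s + i) = 0 := by
  induction m generalizing s₀ with
  | zero => simpa using h s₀ le_rfl
  | succ m ih =>
    by_cases hz : ∃ s ≥ s₀, (hankel a s m).det = 0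
    · obtain ⟨s₁, hs₁, hz⟩ := hz
      refine ih s₁ fun s hs => ?_
      induction s, hs using Nat.le_induction with
      | base => exact hz
      | succ s hs ihs => exact hankel_step (h s (by omega)) ihs
    · push Not at hz
      obtain ⟨c, hc0, hc⟩ := exists_hankel_relation (h s₀ le_rfl)
      have hcm : c (Fin.last m) ≠ 0 := fun h0 =>
        hc0 (hankel_kernel_of_last (hz s₀ le_rfl) h0 fun j hj => hc j (by omega))
      have hc00 : c 0 ≠ 0 := fun h0 =>
        hc0 (hankel_kernel_of_zero (hz (s₀ + 1) (by omega)) h0 fun j hj => hc j (by omega))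
      have key : ∀ s ≥ s₀, ∀ j < m + 1, ∑ i : Fin (m + 1), c i * a (s + i + j) = 0 := by
        intro s hs
        induction s, hs using Nat.le_induction with
        | base => exact hc
        | succ s hs ihs =>
          have hlow : ∀ j < m, ∑ i : Fin (m + 1), c i * a (s + 1 + i + j) = 0 := by
            intro j hj
            rw [← ihs (j + 1) (by omega)]
            refine Finset.sum_congr rfl fun i _ => ?_
            congr 2
            ring
          obtain ⟨c', hc'0, hc'⟩ := exists_hankel_relation (h (s + 1) (by omega))
          have hclast : c' (Fin.last m) ≠ 0 := fun h0 =>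
            hc'0 (hankel_kernel_of_last (hz (s + 1) (by omega)) h0 fun j hj => hc' j (by omega))
          have hcomb : (fun i => c' (Fin.last m) * c i - c (Fin.last m) * c' i) = 0 := by
            apply hankel_kernel_of_last (hz (s + 1) (by omega))
            · ring
            · intro j hj
              have e1 := hlow j hj
              have e2 := hc' j (by omega)
              calc _ = c' (Fin.last m) * ∑ i : Fin (m + 1), c i * a (s + 1 + i + j)
                    - c (Fin.last m) * ∑ i : Fin (m + 1), c' i * a (s + 1 + i + j) := by
                      rw [Finset.mul_sum, Finset.mul_sum, ← Finset.sum_sub_distrib]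
                      exact Finset.sum_congr rfl fun i _ => by ring
                _ = 0 := by rw [e1, e2]; ring
          intro j hj
          have e2 := hc' j hj
          have : c' (Fin.last m) * ∑ i : Fin (m + 1), c i * a (s + 1 + i + j) = 0 := by
            rw [← mul_zero (c (Fin.last m)), ← e2, Finset.mul_sum, Finset.mul_sum]
            refine Finset.sum_congr rfl fun i _ => ?_
            have := congrFun hcomb i
            simp only [Pi.zero_apply] at this
            linear_combination (a (s + 1 + i + j)) * this
          exact (mul_eq_zero.mp this).resolve_left hclast
      refine ⟨m, s₀, fun i => if h : i < m + 1 then c ⟨i, h⟩ else 0, ?_, ?_, ?_⟩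
      · simpa using hc00
      · simpa [Fin.last] using hcm
      · intro s hs
        rw [Finset.sum_range, ← key s hs 0 (by omega)]
        refine Finset.sum_congr rfl fun i _ => ?_
        simp [i.2]

end Hankel

section Recurrent

open Polynomial

variable {K : Type*} [Field K]

/-- The shift operator on sequences. -/
def shift (R : Type*) [CommRing R] : Module.End R (ℕ → R) where
  toFun a := fun k => a (k + 1)
  map_add' _ _ := rfl
  map_smul' _ _ := rfl

lemma shift_pow_apply {R : Type*} [CommRing R] (i : ℕ) (a : ℕ → R) (k : ℕ) :
    ((shift R) ^ i) a k = a (k + i) := by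
  induction i generalizing k with
  | zero => simp
  | succ i ih =>
    rw [pow_succ', Module.End.mul_apply]
    change ((shift R) ^ i) a (k + 1) = _
    rw [ih]
    congr 1
    ring

lemma aeval_shift_apply {R : Type*} [CommRing R] (P : R[X]) (a : ℕ → R) (k : ℕ) :
    aeval (shift R) P a k = P.sum fun i c => c * a (k + i) := by
  rw [aeval_eq_sum_range, Polynomial.sum_over_range _ (by simp)]
  simp [LinearMap.sum_apply, Finset.sum_apply, shift_pow_apply]

/-- A sequence is recurrent if a nonzero polynomial in the shift operator annihilates it. -/
def IsRec (a : ℕ → K) : Prop := ∃ P : K[X], P ≠ 0 ∧ aeval (shift K) P a = 0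

lemma IsRec.add {a b : ℕ → K} (ha : IsRec a) (hb : IsRec b) : IsRec (a + b) := by
  obtain ⟨P, hP, hPa⟩ := ha
  obtain ⟨Q, hQ, hQb⟩ := hb
  refine ⟨P * Q, mul_ne_zero hP hQ, ?_⟩
  have h1 : aeval (shift K) (P * Q) a = 0 := by
    rw [mul_comm, map_mul, Module.End.mul_apply, hPa, map_zero]
  have h2 : aeval (shift K) (P * Q) b = 0 := by
    rw [map_mul, Module.End.mul_apply, hQb, map_zero]
  rw [map_add, h1, h2, add_zero]

lemma IsRec.smul {a : ℕ → K} (c : K) (ha : IsRec a) : IsRec (c • a) := by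
  obtain ⟨P, hP, hPa⟩ := ha
  exact ⟨P, hP, by rw [map_smul, hPa, smul_zero]⟩

lemma IsRec.sum {ι : Type*} (s : Finset ι) {a : ι → ℕ → K} (h : ∀ i ∈ s, IsRec (a i)) :
    IsRec (∑ i ∈ s, a i) := by
  classical
  induction s using Finset.induction_on with
  | empty => exact ⟨1, one_ne_zero, by simp⟩
  | insert i s hi ih =>
    rw [Finset.sum_insert hi]
    exact (h i (by simp)).add (ih fun j hj => h j (by simp [hj]))

lemma isRec_of_hankel {a : ℕ → K} {m₀ : ℕ} (h : ∀ m ≥ m₀, (hankel a 1 m).det = 0) :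
    IsRec a := by
  obtain ⟨d, s₁, c, hc0, hcd, hc⟩ := exists_recurrence_of_hankel m₀ 1
    fun s hs => hankel_det_eq_zero_of_offset h s m₀ hs le_rfl
  set P : K[X] := ∑ i ∈ Finset.range (d + 1), C (c i) * X ^ i with hP
  refine ⟨X ^ s₁ * P, ?_, ?_⟩
  · refine mul_ne_zero (pow_ne_zero _ X_ne_zero) fun h0 => hc0 ?_
    have := congrArg (fun Q => coeff Q 0) h0
    simpa [hP, coeff_C_mul, coeff_X_pow] using this
  · ext k
    rw [map_mul, Module.End.mul_apply, map_pow, aeval_X, shift_pow_apply, hP]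
    simp only [map_sum, map_mul, aeval_C, map_pow, aeval_X, LinearMap.sum_apply,
      Module.End.mul_apply, Finset.sum_apply, Module.algebraMap_end_apply, Pi.smul_apply,
      shift_pow_apply, smul_eq_mul, Pi.zero_apply]
    exact hc (k + s₁) (by omega)

lemma IsRec.hankel {a : ℕ → K} (h : IsRec a) : ∃ m, ∀ s, (hankel a s m).det = 0 := by
  obtain ⟨P, hP, hPa⟩ := h
  refine ⟨P.natDegree + 1, fun s => ?_⟩
  by_contra hdet
  apply hP
  have := hankel_kernel hdet (c := fun i => P.coeff i) ?_
  · apply leadingCoeff_eq_zero.mp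
    simpa using congrFun this (Fin.last _)
  · intro j _
    have := congrFun hPa (s + j)
    rw [aeval_shift_apply, Polynomial.sum_over_range _ (by simp), Finset.sum_range] at this
    rw [Pi.zero_apply] at this
    rw [← this]
    refine Finset.sum_congr rfl fun i _ => ?_
    congr 2
    ring

/-- An integer sequence that is recurrent over a field of characteristic zero satisfies a
recurrence with integer coefficients, the extreme ones nonzero. -/
lemma exists_int_recurrence [CharZero K] {a : ℕ → ℤ} (h : IsRec (fun k => (a k : K))) :
    ∃ (d s₁ : ℕ) (c : ℕ → ℤ), c 0 ≠ 0 ∧ c d ≠ 0 ∧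
      ∀ s ≥ s₁, ∑ i ∈ Finset.range (d + 1), c i * a (s + i) = 0 := by
  obtain ⟨m, hm⟩ := h.hankel
  have hQ : ∀ s ≥ 0, (ExpSumDegree.hankel (fun k => (a k : ℚ)) s m).det = 0 := by
    intro s _
    have hZ : (ExpSumDegree.hankel a s m).det = 0 := by
      have := hm s
      have e : ExpSumDegree.hankel (fun k => (a k : K)) s m
          = (Int.castRingHom K).mapMatrix (ExpSumDegree.hankel a s m) := by
        ext i j; simp [ExpSumDegree.hankel]
      rw [e, ← RingHom.map_det] at this
      simpa using this
    have e : ExpSumDegree.hankel (fun k => (a k : ℚ)) s m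
        = (Int.castRingHom ℚ).mapMatrix (ExpSumDegree.hankel a s m) := by
      ext i j; simp [ExpSumDegree.hankel]
    rw [e, ← RingHom.map_det, hZ, map_zero]
  obtain ⟨d, s₁, c, hc0, hcd, hc⟩ := exists_recurrence_of_hankel m 0 hQ
  obtain ⟨b, hb⟩ := IsLocalization.exist_integer_multiples_of_finset (nonZeroDivisors ℤ)
    ((Finset.range (d + 1)).image c)
  have hb' : ∀ i, ∃ z : ℤ, i < d + 1 → (z : ℚ) = (b : ℤ) * c i := by
    intro i
    by_cases hi : i < d + 1
    · obtain ⟨z, hz⟩ := hb (c i) (Finset.mem_image_of_mem _ (by simpa using hi))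
      exact ⟨z, fun _ => by simpa using hz⟩
    · exact ⟨0, fun h => absurd h hi⟩
  choose z hz using hb'
  have hb0 : ((b : ℤ) : ℚ) ≠ 0 := by
    exact_mod_cast nonZeroDivisors.coe_ne_zero b
  refine ⟨d, s₁, z, ?_, ?_, ?_⟩
  · intro h0
    have := hz 0 (by omega)
    rw [h0] at this
    simp [hc0] at this
  · intro h0
    have := hz d (by omega)
    rw [h0] at this
    simp [hcd] at this
  · intro s hs
    have : ((∑ i ∈ Finset.range (d + 1), z i * a (s + i) : ℤ) : ℚ) = 0 := by
      push_cast
      rw [← mul_zero ((b : ℤ) : ℚ), ← hc s hs, Finset.mul_sum]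
      refine Finset.sum_congr rfl fun i hi => ?_
      rw [hz i (by simpa using hi)]
      ring
    exact_mod_cast this

end Recurrent

end ExpSumDegree

/-! ### The Skolem–Mahler–Lech theorem for integer sequences -/

namespace ExpSumDegree

section SkolemMahlerLech

open Polynomial

/-- Modulo a polynomial over `ℤ/q` with invertible extreme coefficients, `X` has finite
multiplicative order. -/
lemma exists_dvd_X_pow_sub_one {q : ℕ} [NeZero q] (χ : (ZMod q)[X])
    (h0 : IsUnit (χ.coeff 0)) (hl : IsUnit χ.leadingCoeff) :
    ∃ r > 0, χ ∣ X ^ r - 1 := by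
  obtain ⟨u, hu⟩ := hl
  have hmonic : (C (↑u⁻¹ : ZMod q) * χ).Monic :=
    monic_C_mul_of_mul_leadingCoeff_eq_one (by rw [← hu]; simp)
  set g := C (↑u⁻¹ : ZMod q) * χ with hg
  have hfin := hmonic.finite_adjoinRoot
  have : Finite (AdjoinRoot g) := Module.finite_of_finite (ZMod q)
  have hroot : IsUnit (AdjoinRoot.root g) := by
    have h1 : g = X * g.divX + C (g.coeff 0) := (X_mul_divX_add g).symm
    have h2 : AdjoinRoot.mk g g = 0 := AdjoinRoot.mk_self
    rw [h1] at h2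
    have h3 : AdjoinRoot.mk g (X * g.divX + C (g.coeff 0)) = 0 := by
      rw [← h1]; exact AdjoinRoot.mk_self
    rw [map_add, map_mul, AdjoinRoot.mk_X, AdjoinRoot.mk_C] at h3
    have h4 : IsUnit (g.coeff 0) := by
      rw [hg, coeff_C_mul]
      exact (Units.isUnit _).mul h0
    have h5 : IsUnit (AdjoinRoot.of g (g.coeff 0)) := h4.map _
    refine isUnit_of_mul_isUnit_left (y := AdjoinRoot.mk g g.divX) ?_
    rw [eq_neg_of_add_eq_zero_left h3]
    exact h5.neg
  obtain ⟨v, hv⟩ := hroot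
  have hv2 := isOfFinOrder_of_finite v
  refine ⟨orderOf v, hv2.orderOf_pos, ?_⟩
  have : g ∣ X ^ orderOf v - 1 := by
    rw [← AdjoinRoot.mk_eq_zero, map_sub, map_pow, AdjoinRoot.mk_X, ← hv, map_one,
      ← Units.val_pow_eq_pow_val, pow_orderOf_eq_one]
    simp
  exact (Dvd.intro_left _ rfl).trans this

/-- The `ℓ`-adic heart of the Skolem–Mahler–Lech theorem.  The function `b` is interpolated by
polynomials whose coefficients, in the basis of falling factorials, tend `ℓ`-adically to zero.
Dividing by `∏ (X - z)` over `s` zeros `z` only leaves the terms of index at least `s`, so all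
values of `b` are divisible by `ℓ ^ s`. -/
lemma eq_zero_of_infinite_zeros {ℓ : ℕ} (hℓ : ℓ.Prime) (b w : ℕ → ℤ)
    (hb : ∀ n k, k ≤ n → b k = ∑ i ∈ Finset.range (n + 1), (k.choose i : ℤ) * (ℓ ^ (2 * i) * w i))
    (hinf : {k | b k = 0}.Infinite) (x : ℕ) : b x = 0 := by
  have : Fact ℓ.Prime := ⟨hℓ⟩
  have hdvd : ∀ s : ℕ, (ℓ : ℤ) ^ s ∣ b x := by
    intro s
    obtain ⟨Z, hZ, hZs⟩ := hinf.exists_subset_card_eq s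
    obtain ⟨n, hxn, hZn, hsn⟩ : ∃ n, x ≤ n ∧ (∀ z ∈ Z, z ≤ n) ∧ s ≤ n + 1 := by
      refine ⟨x + s + Z.sup id, by omega, fun z hz => ?_, by omega⟩
      have := Finset.le_sup (f := id) hz
      simp only [id] at this
      omega
    set v := padicValNat ℓ n.factorial with hv
    have hcoef : ∀ i ∈ Finset.range (n + 1),
        (ℓ : ℤ) ^ (v + i) ∣ ((n.factorial / i.factorial : ℕ) : ℤ) * (ℓ ^ (2 * i) * w i) := by
      intro i hi
      have hin : i ≤ n := by simpa [Nat.lt_succ_iff] using hi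
      have hD : n.factorial / i.factorial ≠ 0 :=
        (Nat.div_pos (Nat.factorial_le hin) (Nat.factorial_pos i)).ne'
      have hval : padicValNat ℓ (n.factorial / i.factorial) + padicValNat ℓ i.factorial = v := by
        rw [← padicValNat.mul hD (Nat.factorial_ne_zero i),
          Nat.div_mul_cancel (Nat.factorial_dvd_factorial hin)]
      have hle := padicValNat_factorial_le (p := ℓ) i
      have h1 : ℓ ^ padicValNat ℓ (n.factorial / i.factorial) ∣ n.factorial / i.factorial :=
        pow_padicValNat_dvd
      have h2 : (ℓ : ℤ) ^ padicValNat ℓ (n.factorial / i.factorial)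
          ∣ ((n.factorial / i.factorial : ℕ) : ℤ) := by exact_mod_cast h1
      have h3 := mul_dvd_mul h2 (dvd_mul_right ((ℓ : ℤ) ^ (2 * i)) (w i))
      rw [← pow_add] at h3
      exact (pow_dvd_pow _ (by omega)).trans h3
    choose! e he using hcoef
    set t : ℕ → ℤ[X] := fun i => C (((n.factorial / i.factorial : ℕ) : ℤ) * (ℓ ^ (2 * i) * w i)) *
      descPochhammer ℤ i with ht
    have heval : ∀ k ≤ n, (∑ i ∈ Finset.range (n + 1), t i).eval (k : ℤ)
        = n.factorial * b k := by
      intro k hk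
      rw [hb n k hk, eval_finsetSum, Finset.mul_sum]
      refine Finset.sum_congr rfl fun i hi => ?_
      have hin : i ≤ n := by simpa [Nat.lt_succ_iff] using hi
      have h1 : ((n.factorial / i.factorial : ℕ) : ℤ) * (i.factorial : ℤ) = n.factorial := by
        exact_mod_cast Nat.div_mul_cancel (Nat.factorial_dvd_factorial hin)
      simp only [ht, eval_mul, eval_C]
      rw [descPochhammer_eval_eq_descFactorial, Nat.descFactorial_eq_factorial_mul_choose, ← h1]
      push_cast
      ring
    set Q : ℤ[X] := ∑ i ∈ Finset.Ico s (n + 1), C (ℓ ^ (i - s) * e i) * descPochhammer ℤ i with hQ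
    set low : ℤ[X] := ∑ i ∈ Finset.range s, t i with hlow
    have hsplit : ∑ i ∈ Finset.range (n + 1), t i = low + C ((ℓ : ℤ) ^ (v + s)) * Q := by
      rw [← Finset.sum_range_add_sum_Ico _ hsn, hQ, Finset.mul_sum]
      congr 1
      refine Finset.sum_congr rfl fun i hi => ?_
      rw [Finset.mem_Ico] at hi
      simp only [ht]
      rw [he i (by simpa using hi.2), ← mul_assoc, ← C_mul, ← mul_assoc, ← pow_add]
      congr 4
      omega
    set Z' : Finset ℤ := Z.map Nat.castEmbedding with hZ'
    have hcard : Z'.card = s := by simp [hZ', hZs]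
    set M : ℤ[X] := ∏ z ∈ Z', (X - C z) with hM
    have hMmonic : M.Monic := monic_prod_of_monic _ _ fun z _ => monic_X_sub_C z
    have hMdeg : M.degree = s := by
      rw [hM, degree_prod, Finset.sum_congr rfl fun z _ => degree_X_sub_C z]
      simp [hcard]
    have hrem : low + C ((ℓ : ℤ) ^ (v + s)) * (Q %ₘ M) = 0 := by
      apply eq_zero_of_degree_lt_of_eval_finset_eq_zero Z'
      · rw [hcard]
        refine (degree_add_le _ _).trans_lt (max_lt ?_ ?_)
        · refine (degree_sum_le _ _).trans_lt ?_
          rw [Finset.sup_lt_iff (by exact WithBot.bot_lt_coe s)]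
          intro i hi
          simp only [ht]
          rw [← smul_eq_C_mul]
          refine (degree_smul_le _ _).trans_lt ?_
          refine degree_le_natDegree.trans_lt ?_
          rw [descPochhammer_natDegree]
          exact_mod_cast Finset.mem_range.mp hi
        · rw [← smul_eq_C_mul]
          refine (degree_smul_le _ _).trans_lt ?_
          rw [← hMdeg]
          exact degree_modByMonic_lt _ hMmonic
      · intro z hz
        have hMz : M.eval z = 0 := by
          rw [hM, eval_prod]
          exact Finset.prod_eq_zero hz (by simp)
        obtain ⟨k, hk, rfl⟩ := Finset.mem_map.mp hz
        have h1 := heval k (hZn k hk)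
        have h2 : b k = 0 := hZ hk
        rw [h2, mul_zero, hsplit, ← modByMonic_add_div Q M] at h1
        simp only [Nat.castEmbedding_apply] at hMz ⊢
        simp only [eval_add, eval_mul, eval_C, hMz, zero_mul, add_zero] at h1 ⊢
        exact h1
    have hfin : (n.factorial : ℤ) * b x
        = (ℓ : ℤ) ^ (v + s) * (M.eval (x : ℤ) * (Q /ₘ M).eval (x : ℤ)) := by
      have h1 := congrArg (eval (x : ℤ)) hrem
      rw [← heval x hxn, hsplit]
      conv_lhs => rw [← modByMonic_add_div Q M]
      simp only [eval_add, eval_mul, eval_C, eval_zero] at h1 ⊢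
      linear_combination h1
    obtain ⟨u, hu⟩ : ℓ ^ v ∣ n.factorial := pow_padicValNat_dvd
    have hcop : ¬ ℓ ∣ u := by
      rintro ⟨u', rfl⟩
      have : ℓ ^ (v + 1) ∣ n.factorial := ⟨u', by rw [hu]; ring⟩
      exact pow_succ_padicValNat_not_dvd (Nat.factorial_ne_zero n) this
    have hℓ0 : (ℓ : ℤ) ^ v ≠ 0 := pow_ne_zero _ (by exact_mod_cast hℓ.ne_zero)
    have h5 : (ℓ : ℤ) ^ s ∣ (u : ℤ) * b x := by
      refine ⟨M.eval (x : ℤ) * (Q /ₘ M).eval (x : ℤ), ?_⟩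
      apply mul_left_cancel₀ hℓ0
      have : (n.factorial : ℤ) = ℓ ^ v * u := by exact_mod_cast hu
      rw [this, pow_add] at hfin
      linear_combination hfin
    refine IsCoprime.dvd_of_dvd_mul_left ?_ h5
    apply IsCoprime.pow_left
    exact Nat.isCoprime_iff_coprime.mpr ((Nat.Prime.coprime_iff_not_dvd hℓ).mpr hcop)
  by_contra hne
  obtain ⟨N, hN⟩ : FiniteMultiplicity (ℓ : ℤ) (b x) :=
    Int.finiteMultiplicity_iff.mpr ⟨by simpa using hℓ.ne_one, hne⟩
  exact hN (hdvd (N + 1))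

/-- The Skolem–Mahler–Lech theorem for integer sequences: the zero set of a linear recurrence is
eventually periodic.  Choosing a prime `ℓ` prime to the extreme coefficients, one finds `r` such
that `shift ^ r - 1` acts as `ℓ ^ 2` times an integral polynomial in the shift; each residue
class modulo `r` is then handled by `eq_zero_of_infinite_zeros`. -/
lemma skolem_mahler_lech {a : ℕ → ℤ} {d s₁ : ℕ} {c : ℕ → ℤ} (hc0 : c 0 ≠ 0) (hcd : c d ≠ 0)
    (hc : ∀ s ≥ s₁, ∑ i ∈ Finset.range (d + 1), c i * a (s + i) = 0) :
    ∃ N r : ℕ, 0 < r ∧ ∀ k > N, (a (k + r) = 0 ↔ a k = 0) := by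
  obtain ⟨ℓ, hℓbig, hℓ⟩ := Nat.exists_infinite_primes ((c 0 * c d).natAbs + 1)
  have hnd : ¬ (ℓ : ℤ) ∣ c 0 * c d := by
    intro h
    have h1 := Int.natAbs_dvd_natAbs.mpr h
    have h2 := Nat.le_of_dvd (Int.natAbs_pos.mpr (mul_ne_zero hc0 hcd)) h1
    simp at h2 hℓbig
    omega
  have hunit : ∀ z : ℤ, ¬ (ℓ : ℤ) ∣ z → IsUnit (z : ZMod (ℓ ^ 2)) := by
    intro z hz
    rw [ZMod.coe_int_isUnit_iff_isCoprime]
    push_cast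
    apply IsCoprime.pow_left
    exact (Prime.coprime_iff_not_dvd (Nat.prime_iff_prime_int.mp hℓ)).mpr hz
  have : NeZero (ℓ ^ 2) := ⟨pow_ne_zero _ hℓ.ne_zero⟩
  set χ : ℤ[X] := ∑ i ∈ Finset.range (d + 1), C (c i) * X ^ i with hχ
  set φ : ℤ[X] →+* (ZMod (ℓ ^ 2))[X] := mapRingHom (Int.castRingHom (ZMod (ℓ ^ 2))) with hφ
  have hcoeff : ∀ i, (φ χ).coeff i = if i < d + 1 then (c i : ZMod (ℓ ^ 2)) else 0 := by
    intro i
    simp [hφ, hχ, coeff_X_pow]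
  have hu0 : IsUnit ((φ χ).coeff 0) := by
    rw [hcoeff]
    simpa using hunit _ fun h => hnd (h.mul_right _)
  have hud : IsUnit ((φ χ).coeff d) := by
    rw [hcoeff]
    simpa using hunit _ fun h => hnd (h.mul_left _)
  have hnt : Nontrivial (ZMod (ℓ ^ 2)) := by
    have : 1 < ℓ ^ 2 := Nat.one_lt_pow (by norm_num) hℓ.one_lt
    exact ZMod.nontrivial_iff.mpr this.ne'
  have hdeg : (φ χ).natDegree = d := by
    refine natDegree_eq_of_le_of_coeff_ne_zero ?_ hud.ne_zero
    rw [natDegree_le_iff_coeff_eq_zero]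
    intro N hN
    rw [hcoeff, if_neg (by omega)]
  obtain ⟨r, hr, hdvd⟩ := exists_dvd_X_pow_sub_one (φ χ) hu0 (by rwa [leadingCoeff, hdeg])
  obtain ⟨h', hh'⟩ := hdvd
  obtain ⟨h, rfl⟩ : ∃ h, φ h = h' :=
    map_surjective _ (ZMod.ringHom_surjective _) h'
  obtain ⟨g, hg⟩ : C ((ℓ : ℤ) ^ 2) ∣ (X ^ r - 1 - χ * h : ℤ[X]) := by
    rw [C_dvd_iff_dvd_coeff]
    intro i
    have h1 : φ (X ^ r - 1 - χ * h) = 0 := by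
      rw [map_sub, map_mul, ← hh']
      simp [hφ]
    have h2 := congrArg (fun P => coeff P i) h1
    simp only [hφ, coe_mapRingHom, coeff_map, coeff_zero, eq_intCast] at h2
    rw [ZMod.intCast_zmod_eq_zero_iff_dvd] at h2
    exact_mod_cast h2
  -- the tail of `a` on which the recurrence holds
  set a' : ℕ → ℤ := fun k => a (s₁ + k) with ha'
  have hχa : aeval (shift ℤ) χ a' = 0 := by
    ext k
    simp only [hχ, map_sum, map_mul, aeval_C, map_pow, aeval_X, LinearMap.sum_apply,
      Module.End.mul_apply, Finset.sum_apply, Module.algebraMap_end_apply, Pi.smul_apply,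
      shift_pow_apply, smul_eq_mul, Pi.zero_apply, ha']
    rw [← hc (s₁ + k) (by omega)]
    exact Finset.sum_congr rfl fun i _ => by rw [add_assoc]
  have hχP : ∀ P : ℤ[X], aeval (shift ℤ) (P * χ) a' = 0 := fun P => by
    rw [map_mul, Module.End.mul_apply, hχa, map_zero]
  have hpow : ∀ i, aeval (shift ℤ) ((X ^ r - 1) ^ i : ℤ[X]) a'
      = (ℓ : ℤ) ^ (2 * i) • aeval (shift ℤ) (g ^ i) a' := by
    intro i
    have hd : χ ∣ (X ^ r - 1) ^ i - (C ((ℓ : ℤ) ^ 2) * g) ^ i :=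
      (Dvd.intro h (by rw [← hg]; ring)).trans (sub_dvd_pow_sub_pow _ _ i)
    obtain ⟨P, hP⟩ := hd
    rw [sub_eq_iff_eq_add] at hP
    rw [hP, map_add, mul_comm χ P, LinearMap.add_apply, hχP, zero_add, mul_pow, ← C_pow,
      ← pow_mul, map_mul, aeval_C, Module.End.mul_apply, Module.algebraMap_end_apply]
  have hclass : ∀ j : ℕ, ∃ N, ∀ k > N, (a' (j + r * (k + 1)) = 0 ↔ a' (j + r * k) = 0) := by
    intro j
    by_cases hinf : {k | a' (j + r * k) = 0}.Infinite
    · have := eq_zero_of_infinite_zeros hℓ (fun k => a' (j + r * k))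
        (fun i => aeval (shift ℤ) (g ^ i) a' j) ?_ hinf
      · exact ⟨0, fun k _ => by simp [this]⟩
      · intro n k hkn
        have h1 : (X ^ (r * k) : ℤ[X])
            = ∑ i ∈ Finset.range (n + 1), (X ^ r - 1) ^ i * C (k.choose i : ℤ) := by
          rw [pow_mul]
          conv_lhs => rw [← sub_add_cancel (X ^ r : ℤ[X]) 1]
          rw [add_pow]
          have hsub : Finset.range (k + 1) ⊆ Finset.range (n + 1) :=
            Finset.range_mono (by omega)
          rw [← Finset.sum_subset hsub]
          · exact Finset.sum_congr rfl fun i _ => by simp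
          · intro i _ hi
            simp only [Finset.mem_range, not_lt] at hi
            rw [Nat.choose_eq_zero_of_lt (by omega)]
            simp
        have h2 := congrFun (congrArg (fun P => aeval (shift ℤ) P a') h1) j
        simp only [map_pow, aeval_X, shift_pow_apply] at h2
        rw [h2, map_sum, LinearMap.sum_apply, Finset.sum_apply]
        refine Finset.sum_congr rfl fun i _ => ?_
        rw [mul_comm, map_mul, aeval_C, Module.End.mul_apply, Module.algebraMap_end_apply, hpow]
        simp [mul_comm]
    · rw [Set.not_infinite] at hinf
      obtain ⟨N, hN⟩ := hinf.bddAbove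
      refine ⟨N, fun k hk => ?_⟩
      have h1 : a' (j + r * k) ≠ 0 := fun h => by
        have := hN h
        omega
      have h2 : a' (j + r * (k + 1)) ≠ 0 := fun h => by
        have := hN h
        omega
      simp [h1, h2]
  choose N hN using hclass
  refine ⟨s₁ + r * ((Finset.range r).sup N + 1) + r, r, hr, fun k hk => ?_⟩
  obtain ⟨k', rfl⟩ : ∃ k', k = s₁ + k' := ⟨k - s₁, by omega⟩
  have hk' : k' = k' % r + r * (k' / r) := (Nat.mod_add_div k' r).symm
  have hlt : k' % r < r := Nat.mod_lt _ hr
  have h1 : N (k' % r) ≤ (Finset.range r).sup N := Finset.le_sup (by simpa using hlt)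
  have h2 : k' / r > N (k' % r) := by
    have : (Finset.range r).sup N + 1 ≤ k' / r := by
      rw [Nat.le_div_iff_mul_le hr, mul_comm]
      omega
    omega
  have := hN (k' % r) (k' / r) h2
  rw [← hk'] at this
  simp only [ha'] at this
  rw [← this, add_assoc s₁ k' r]
  conv_lhs => rw [hk']
  rw [add_assoc, mul_add, mul_one]

end SkolemMahlerLech

end ExpSumDegree

/-! ### Characters of `ℤ[ℤ/p]` and degrees -/

namespace ExpSumDegree

section Characters

variable {p : ℕ} [Fact p.Prime] {A : Type*} [CommRing A]

/-- The ring homomorphism `ℤ[C_p] → A` sending the generator of `C_p` to `μ ^ b`,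
for `μ` a `p`-th root of unity. -/
noncomputable def chi {μ : A} (hμ : μ ^ p = 1) (b : ZMod p) :
    AddMonoidAlgebra ℤ (ZMod p) →+* A :=
  (AddMonoidAlgebra.lift ℤ A (ZMod p)
    ((AddChar.zmodChar p hμ).mulShift b).toMonoidHom).toRingHom

lemma chi_apply {μ : A} (hμ : μ ^ p = 1) (b : ZMod p) (x : AddMonoidAlgebra ℤ (ZMod p)) :
    chi hμ b x = ∑ t, (x.coeff t : A) * μ ^ (b * t).val := by
  simp only [chi, AlgHom.toRingHom_eq_coe, RingHom.coe_coe, AddMonoidAlgebra.lift_apply]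
  rw [Finsupp.sum_fintype _ _ (by simp)]
  refine Finset.sum_congr rfl fun t _ => ?_
  rw [← AddChar.zmodChar_apply hμ]
  simp [zsmul_eq_mul]

lemma map_chi {B : Type*} [CommRing B] (φ : A →+* B) {μ : A} (hμ : μ ^ p = 1)
    (hφ : φ μ ^ p = 1) (b : ZMod p) (x : AddMonoidAlgebra ℤ (ZMod p)) :
    φ (chi hμ b x) = chi hφ b x := by
  simp [chi_apply]

/-- Fourier inversion on `ℤ/p`. -/
lemma fourier_inversion [IsDomain A] {μ : A} (hμ : IsPrimitiveRoot μ p)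
    (x : AddMonoidAlgebra ℤ (ZMod p)) (t : ZMod p) :
    (p : A) * x.coeff t = ∑ b : ZMod p, μ ^ (-(b * t)).val * chi hμ.pow_eq_one b x := by
  have key : ∀ u : ZMod p, ∑ b : ZMod p, μ ^ (-(b * t)).val * μ ^ (b * u).val
      = if u = t then (p : A) else 0 := by
    intro u
    have h1 := AddChar.sum_mulShift (u - t)
      (AddChar.zmodChar_primitive_of_primitive_root p hμ)
    simp only [sub_eq_zero, ZMod.card] at h1
    have h2 : ∀ b : ZMod p, μ ^ (-(b * t)).val * μ ^ (b * u).val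
        = AddChar.zmodChar p hμ.pow_eq_one (b * (u - t)) := by
      intro b
      rw [← AddChar.zmodChar_apply hμ.pow_eq_one, ← AddChar.zmodChar_apply hμ.pow_eq_one,
        ← AddChar.map_add_eq_mul]
      congr 1
      ring
    simp_rw [h2]
    rw [h1]
    split_ifs <;> simp
  simp_rw [chi_apply, Finset.mul_sum]
  rw [Finset.sum_comm]
  have : ∀ u : ZMod p, ∑ b : ZMod p, μ ^ (-(b * t)).val * ((x.coeff u : A) * μ ^ (b * u).val)
      = if u = t then (p : A) * x.coeff u else 0 := by
    intro u
    rw [← zero_mul ((x.coeff u : A)), ← ite_mul, ← key u, Finset.sum_mul]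
    exact Finset.sum_congr rfl fun b _ => by ring
  simp_rw [this]
  simp

lemma chi_eq_zero_of_chi_one [IsDomain A] [CharZero A] {μ : A} (hμ : IsPrimitiveRoot μ p)
    (x : AddMonoidAlgebra ℤ (ZMod p)) (hx : chi hμ.pow_eq_one 1 x = 0) {b : ZMod p}
    (hb : b ≠ 0) : chi hμ.pow_eq_one b x = 0 := by
  set P : Polynomial ℤ := ∑ t : ZMod p, Polynomial.C (x.coeff t) * Polynomial.X ^ t.val with hP
  have hev : ∀ c : ZMod p, Polynomial.aeval (μ ^ c.val) P = chi hμ.pow_eq_one c x := by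
    intro c
    rw [chi_apply]
    simp only [hP, map_sum, map_mul, Polynomial.aeval_C, map_pow, Polynomial.aeval_X,
      algebraMap_int_eq, Int.coe_castRingHom]
    refine Finset.sum_congr rfl fun t _ => ?_
    rw [← pow_mul, ZMod.val_mul, ← pow_mod_orderOf μ (c.val * t.val), ← hμ.eq_orderOf]
  have hp : p.Prime := Fact.out
  have hcop : b.val.Coprime p := by
    rw [Nat.coprime_comm, hp.coprime_iff_not_dvd]
    intro h
    have := Nat.le_of_dvd (Nat.pos_of_ne_zero (by simpa using hb)) h
    exact absurd (ZMod.val_lt b) (by omega)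
  have h1 : minpoly ℤ μ ∣ P := by
    refine minpoly.isIntegrallyClosed_dvd (hμ.isIntegral hp.pos) ?_
    have := hev 1
    have h11 : (1 : ZMod p).val = 1 := by
      have : Fact (1 < p) := ⟨hp.one_lt⟩
      exact ZMod.val_one p
    rwa [hx, h11, pow_one] at this
  rw [← hev]
  rw [hμ.minpoly_eq_pow_coprime hcop] at h1
  obtain ⟨Q, hQ⟩ := h1
  rw [hQ, map_mul, minpoly.aeval, zero_mul]

lemma chi_eq_chi_one_iff [IsDomain A] [CharZero A] {μ : A} (hμ : IsPrimitiveRoot μ p)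
    (x : AddMonoidAlgebra ℤ (ZMod p)) (a : (ZMod p)ˣ) :
    chi hμ.pow_eq_one a x = chi hμ.pow_eq_one 1 x ↔
      ∀ t, x.coeff (a * t) = x.coeff t := by
  -- `y` is the translate of `x` by the multiplication by `a`
  set y : AddMonoidAlgebra ℤ (ZMod p) :=
    .ofCoeff (Finsupp.equivFunOnFinite.symm fun t => x.coeff (a * t)) with hy
  have hyc : ∀ t, y.coeff t = x.coeff (a * t) := fun t => rfl
  have hchi : chi hμ.pow_eq_one a y = chi hμ.pow_eq_one 1 x := by
    rw [chi_apply, chi_apply]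
    refine Fintype.sum_equiv (Units.mulLeft a) _ _ fun t => ?_
    simp [hyc]
  have hy1 : chi hμ.pow_eq_one a x = chi hμ.pow_eq_one 1 x ↔
      chi hμ.pow_eq_one (a : ZMod p) (y - x) = 0 := by
    rw [map_sub, hchi, sub_eq_zero, eq_comm]
  rw [hy1]
  constructor
  · intro h t
    -- all nontrivial characters kill `y - x`
    have hall : ∀ b : ZMod p, b ≠ 0 → chi hμ.pow_eq_one b (y - x) = 0 := by
      intro b hb
      have hcop := ZMod.val_coe_unit_coprime a
      have hμa : IsPrimitiveRoot (μ ^ (a : ZMod p).val) p := hμ.pow_of_coprime _ hcop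
      have hconv : ∀ c : ZMod p, chi hμa.pow_eq_one c (y - x)
          = chi hμ.pow_eq_one (a * c) (y - x) := by
        intro c
        rw [chi_apply, chi_apply]
        refine Finset.sum_congr rfl fun t _ => ?_
        rw [← pow_mul, mul_assoc, ZMod.val_mul (a : ZMod p), ← pow_mod_orderOf,
          ← hμ.eq_orderOf]
      have h1 : chi hμa.pow_eq_one 1 (y - x) = 0 := by rw [hconv, mul_one, h]
      have h2 := chi_eq_zero_of_chi_one hμa _ h1 (b := (a⁻¹ : (ZMod p)ˣ) * b)
        (mul_ne_zero (Units.ne_zero _) hb)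
      rwa [hconv, ← mul_assoc, Units.mul_inv, one_mul] at h2
    have hconst : ∀ t, (p : A) * (y - x).coeff t = chi hμ.pow_eq_one 0 (y - x) := by
      intro t
      rw [fourier_inversion hμ, Finset.sum_eq_single 0]
      · simp
      · intro b _ hb
        rw [hall b hb, mul_zero]
      · simp
    have hp0 : (p : A) ≠ 0 := by exact_mod_cast (Fact.out : p.Prime).ne_zero
    have h3 := mul_left_cancel₀ hp0 ((hconst t).trans (hconst 0).symm)
    have h4 : (y - x).coeff t = (y - x).coeff 0 := by exact_mod_cast h3
    simp only [AddMonoidAlgebra.coeff_sub, Finsupp.coe_sub, Pi.sub_apply, hyc, mul_zero,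
      sub_self] at h4
    linarith
  · intro h
    have : y = x := by
      ext t
      exact h t
    simp [this]

open IntermediateField in
/-- The field generated by `χ(x)` over `ℚ` depends only on the stabiliser of `x` under the action
of `(ℤ/p)ˣ`, by the Galois correspondence for the cyclotomic field. -/
lemma finrank_adjoin_chi_eq {ζ : ℂ} (hζ : IsPrimitiveRoot ζ p)
    {x y : AddMonoidAlgebra ℤ (ZMod p)}
    (h : ∀ a : (ZMod p)ˣ, (∀ t, x.coeff (a * t) = x.coeff t) ↔
      ∀ t, y.coeff (a * t) = y.coeff t) :
    Module.finrank ℚ ℚ⟮chi hζ.pow_eq_one 1 x⟯ = Module.finrank ℚ ℚ⟮chi hζ.pow_eq_one 1 y⟯ := by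
  have hp : p.Prime := Fact.out
  let L := CyclotomicField p ℚ
  have : NeZero ((p : ℕ) : ℚ) := ⟨by exact_mod_cast hp.ne_zero⟩
  have : IsCyclotomicExtension {p} ℚ L := CyclotomicField.isCyclotomicExtension p ℚ
  have : FiniteDimensional ℚ L := IsCyclotomicExtension.finiteDimensional {p} ℚ L
  have : IsGalois ℚ L := IsCyclotomicExtension.isGalois {p} ℚ L
  let φ : L →ₐ[ℚ] ℂ := IsAlgClosed.lift
  obtain ⟨μ, hμ, hφμ⟩ : ∃ μ : L, IsPrimitiveRoot μ p ∧ φ μ = ζ := by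
    have h0 := IsCyclotomicExtension.zeta_spec p ℚ L
    obtain ⟨i, _, hi⟩ := (h0.map_of_injective φ.injective).eq_pow_of_pow_eq_one hζ.pow_eq_one
    have : φ (IsCyclotomicExtension.zeta p ℚ L ^ i) = ζ := (map_pow _ _ _).trans hi
    refine ⟨_, IsPrimitiveRoot.of_map_of_injective (f := φ) ?_ φ.injective, this⟩
    rwa [this]
  have hstep : ∀ z : AddMonoidAlgebra ℤ (ZMod p),
      Module.finrank ℚ ℚ⟮chi hζ.pow_eq_one 1 z⟯
        = Module.finrank ℚ ℚ⟮chi hμ.pow_eq_one 1 z⟯ := by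
    intro z
    have hz : chi hζ.pow_eq_one 1 z = φ (chi hμ.pow_eq_one 1 z) := by
      subst hφμ
      exact (map_chi (φ : L →+* ℂ) hμ.pow_eq_one hζ.pow_eq_one 1 z).symm
    have hInt : IsIntegral ℚ (chi hμ.pow_eq_one 1 z) := Algebra.IsIntegral.isIntegral _
    rw [hz, adjoin.finrank hInt, adjoin.finrank (hInt.map φ),
      minpoly.algHom_eq φ φ.injective]
  rw [hstep, hstep]
  have hfix : ∀ (z : AddMonoidAlgebra ℤ (ZMod p)) (σ : Gal(L/ℚ)),
      σ ∈ (ℚ⟮chi hμ.pow_eq_one 1 z⟯).fixingSubgroup ↔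
        ∀ t, z.coeff ((hμ.autToPow ℚ σ : (ZMod p)ˣ) * t) = z.coeff t := by
    intro z σ
    rw [← chi_eq_chi_one_iff hμ, IntermediateField.mem_fixingSubgroup_iff]
    have h1 := forall_mem_adjoin_smul_eq_self_iff ℚ (S := {chi hμ.pow_eq_one 1 z}) σ
    simp only [AlgEquiv.smul_def, Set.mem_singleton_iff, forall_eq] at h1
    rw [h1]
    have h2 : σ (chi hμ.pow_eq_one 1 z)
        = chi hμ.pow_eq_one (hμ.autToPow ℚ σ : (ZMod p)ˣ) z := by
      rw [chi_apply, chi_apply, map_sum]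
      refine Finset.sum_congr rfl fun t _ => ?_
      rw [map_mul, map_intCast, map_pow, ← hμ.autToPow_spec ℚ σ, ← pow_mul, one_mul,
        ZMod.val_mul, ← pow_mod_orderOf, ← hμ.eq_orderOf]
    rw [h2]
  have hsub : (ℚ⟮chi hμ.pow_eq_one 1 x⟯).fixingSubgroup
      = (ℚ⟮chi hμ.pow_eq_one 1 y⟯).fixingSubgroup := by
    ext σ
    rw [hfix, hfix, h]
  have : (ℚ⟮chi hμ.pow_eq_one 1 x⟯) = ℚ⟮chi hμ.pow_eq_one 1 y⟯ := by
    rw [← IsGalois.fixedField_fixingSubgroup (ℚ⟮chi hμ.pow_eq_one 1 x⟯), hsub,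
      IsGalois.fixedField_fixingSubgroup]
  rw [this]

lemma exists_common_period {ι : Type*} [Fintype ι] {Q : ι → ℕ → Prop}
    (h : ∀ i, ∃ N r, 0 < r ∧ ∀ k > N, (Q i (k + r) ↔ Q i k)) :
    ∃ N r, 0 < N ∧ 0 < r ∧ ∀ k > N, ∀ i, (Q i (k + r) ↔ Q i k) := by
  classical
  choose N r hr h using h
  have hmul : ∀ i m, ∀ k > N i, (Q i (k + r i * m) ↔ Q i k) := by
    intro i m
    induction m with
    | zero => simp
    | succ m ih =>
      intro k hk
      rw [mul_add, mul_one, ← add_assoc, h i _ (by omega), ih k hk]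
  refine ⟨Finset.univ.sup N + 1, ∏ i, r i, by omega, Finset.prod_pos fun i _ => hr i, ?_⟩
  intro k hk i
  have hNi : N i ≤ Finset.univ.sup N := Finset.le_sup (Finset.mem_univ i)
  rw [← Finset.mul_prod_erase _ _ (Finset.mem_univ i)]
  exact hmul i _ k (by omega)

/-- If the Hankel determinants of a sequence in `ℤ[C_p]` eventually vanish, then the degrees of
its image in `ℚ(ζ_p)` are eventually periodic. -/
lemma degree_periodic_of_hankel {ζ : ℂ} (hζ : IsPrimitiveRoot ζ p)
    {s : ℕ → AddMonoidAlgebra ℤ (ZMod p)} {m₀ : ℕ} (hs : ∀ m ≥ m₀, (hankel s 1 m).det = 0) :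
    ∃ N r : ℕ, 0 < N ∧ 0 < r ∧ ∀ k > N,
      Module.finrank ℚ ↥(IntermediateField.adjoin ℚ {chi hζ.pow_eq_one 1 (s (k + r))}) =
        Module.finrank ℚ ↥(IntermediateField.adjoin ℚ {chi hζ.pow_eq_one 1 (s k)}) := by
  have hchi : ∀ b, IsRec (fun k => chi hζ.pow_eq_one b (s k)) := by
    intro b
    refine isRec_of_hankel (m₀ := m₀) fun m hm => ?_
    have h1 := congrArg (chi hζ.pow_eq_one b) (hs m hm)
    rw [RingHom.map_det, map_zero] at h1
    exact h1
  have hcoeff : ∀ t, IsRec (fun k => ((s k).coeff t : ℂ)) := by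
    intro t
    have h1 := (IsRec.sum Finset.univ fun b _ =>
      (hchi b).smul (ζ ^ (-(b * t)).val)).smul ((p : ℂ)⁻¹)
    convert h1 using 1
    ext k
    have hp0 : (p : ℂ) ≠ 0 := by exact_mod_cast (Fact.out : p.Prime).ne_zero
    simp only [Pi.smul_apply, Finset.sum_apply, smul_eq_mul]
    rw [← fourier_inversion hζ, inv_mul_cancel_left₀ hp0]
  have hper : ∀ i : (ZMod p)ˣ × ZMod p, ∃ N r, 0 < r ∧ ∀ k > N,
      ((s (k + r)).coeff (i.1 * i.2) - (s (k + r)).coeff i.2 = 0 ↔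
        (s k).coeff (i.1 * i.2) - (s k).coeff i.2 = 0) := by
    rintro ⟨a, t⟩
    have h1 : IsRec (fun k => (((s k).coeff (a * t) - (s k).coeff t : ℤ) : ℂ)) := by
      convert (hcoeff (a * t)).add ((hcoeff t).smul (-1)) using 1
      ext k
      simp [sub_eq_add_neg]
    obtain ⟨d, s₁, c, hc0, hcd, hc⟩ := exists_int_recurrence h1
    exact skolem_mahler_lech (a := fun k => (s k).coeff (a * t) - (s k).coeff t) hc0 hcd hc
  obtain ⟨N, r, hN, hr, h⟩ := exists_common_period
    (Q := fun (i : (ZMod p)ˣ × ZMod p) k => (s k).coeff (i.1 * i.2) - (s k).coeff i.2 = 0) hper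
  refine ⟨N, r, hN, hr, fun k hk => finrank_adjoin_chi_eq hζ fun a => forall_congr' fun t => ?_⟩
  have := h k hk (a, t)
  simpa only [sub_eq_zero] using this

end Characters

end ExpSumDegree

/-! ### Decay of power series, Hankel determinants and traces -/

namespace ExpSumDegree

section Decay

variable {R : Type*} [CommRing R]

/-- The generating series `∑ s_{k+1} T^k` becomes, after multiplication by a series `D` with
`D(0) = 1`, a series `E`, where the `j`-th coefficients of `D` and `E` are divisible by
`π ^ (c * j - b)` (with truncated subtraction). -/
def Decay (π : R) (c b : ℕ) (s : ℕ → R) : Prop :=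
  ∃ D E : PowerSeries R, PowerSeries.coeff 0 D = 1 ∧
    (∀ j, π ^ (c * j - b) ∣ PowerSeries.coeff j D) ∧
    (∀ j, π ^ (c * j - b) ∣ PowerSeries.coeff j E) ∧
    D * PowerSeries.mk (fun k => s (k + 1)) = E

lemma dvd_coeff_mul {π : R} {c b₁ b₂ : ℕ} {F G : PowerSeries R}
    (hF : ∀ j, π ^ (c * j - b₁) ∣ PowerSeries.coeff j F)
    (hG : ∀ j, π ^ (c * j - b₂) ∣ PowerSeries.coeff j G) (j : ℕ) :
    π ^ (c * j - (b₁ + b₂)) ∣ PowerSeries.coeff j (F * G) := by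
  rw [PowerSeries.coeff_mul]
  refine Finset.dvd_sum fun x hx => ?_
  rw [Finset.HasAntidiagonal.mem_antidiagonal] at hx
  refine dvd_trans (pow_dvd_pow π ?_) ((pow_add π _ _).symm ▸ mul_dvd_mul (hF x.1) (hG x.2))
  rw [← hx, mul_add]
  omega

lemma Decay.zero (π : R) (c b : ℕ) : Decay π c b (fun _ => 0) := by
  refine ⟨1, 0, by simp, fun j => ?_, by simp, ?_⟩
  · rw [PowerSeries.coeff_one]
    split_ifs with h <;> simp [h]
  · ext; simp

lemma Decay.mul_left {π : R} {c b : ℕ} {s : ℕ → R} (r : R) (h : Decay π c b s) :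
    Decay π c b (fun k => r * s k) := by
  obtain ⟨D, E, h0, hD, hE, h⟩ := h
  refine ⟨D, PowerSeries.C r * E, h0, hD, fun j => ?_, ?_⟩
  · rw [PowerSeries.coeff_C_mul]
    exact (hE j).mul_left r
  · rw [← h, ← mul_assoc, mul_comm _ D, mul_assoc]
    congr 1
    ext; simp

lemma Decay.add {π : R} {c b₁ b₂ : ℕ} {s₁ s₂ : ℕ → R} (h₁ : Decay π c b₁ s₁)
    (h₂ : Decay π c b₂ s₂) : Decay π c (b₁ + b₂) (fun k => s₁ k + s₂ k) := by
  obtain ⟨D₁, E₁, h0₁, hD₁, hE₁, h₁⟩ := h₁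
  obtain ⟨D₂, E₂, h0₂, hD₂, hE₂, h₂⟩ := h₂
  refine ⟨D₁ * D₂, E₁ * D₂ + D₁ * E₂, ?_, dvd_coeff_mul hD₁ hD₂, fun j => ?_, ?_⟩
  · simp only [PowerSeries.coeff_zero_eq_constantCoeff] at *
    simp [h0₁, h0₂]
  · rw [map_add]
    exact dvd_add (dvd_coeff_mul hE₁ hD₂ j) (dvd_coeff_mul hD₁ hE₂ j)
  · rw [← h₁, ← h₂]
    have : PowerSeries.mk (fun k => s₁ (k + 1) + s₂ (k + 1))
        = PowerSeries.mk (fun k => s₁ (k + 1)) + PowerSeries.mk (fun k => s₂ (k + 1)) := by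
      ext; simp
    rw [this]
    ring

lemma Decay.sum {ι : Type*} {π : R} {c b : ℕ} (t : Finset ι) {s : ι → ℕ → R}
    (h : ∀ i ∈ t, Decay π c b (s i)) :
    Decay π c (t.card * b) (fun k => ∑ i ∈ t, s i k) := by
  classical
  induction t using Finset.induction_on with
  | empty => simpa using Decay.zero π c 0
  | insert i t hi ih =>
    have := (h i (Finset.mem_insert_self i t)).add
      (ih fun j hj => h j (Finset.mem_insert_of_mem hj))
    simp only [Finset.sum_insert hi, Finset.card_insert_of_notMem hi]
    convert this using 1
    ring

/-- Row operations by the unitriangular Toeplitz matrix of `D` make the `i`-th row of the Hankel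
matrix divisible by `π ^ (c * i - b)`. -/
lemma Decay.dvd_hankel_det {π : R} {c b : ℕ} {s : ℕ → R} (h : Decay π c b s) (m : ℕ) :
    π ^ (∑ i ∈ Finset.range m, (c * i - b)) ∣ (hankel s 1 m).det := by
  obtain ⟨D, E, h0, hD, hE, h⟩ := h
  set L : Matrix (Fin m) (Fin m) R := Matrix.of fun i j =>
    if (j : ℕ) ≤ i then PowerSeries.coeff (i - j : ℕ) D else 0 with hL
  have hLdet : L.det = 1 := by
    rw [Matrix.det_of_isLowerTriangular L]
    · refine Finset.prod_eq_one fun i _ => ?_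
      simpa [hL] using h0
    · intro i j hij
      have : ¬ (j : ℕ) ≤ i := by simpa using hij
      simp only [hL, Matrix.of_apply, if_neg this]
  have hrow : ∀ i j : Fin m, π ^ (c * i - b) ∣ (L * hankel s 1 m) i j := by
    intro i j
    -- the entry is the coefficient of `T ^ (i + j)` in `E`, minus terms with high coefficients
    -- of `D`
    have h1 : (L * hankel s 1 m) i j
        = ∑ q ∈ Finset.range (i + 1), PowerSeries.coeff (i - q : ℕ) D * s (q + j + 1) := by
      rw [Matrix.mul_apply]
      have hsub : Finset.range (i + 1) ⊆ Finset.range m := Finset.range_mono (by omega)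
      have h2 : ∀ q : Fin m, L i q * hankel s 1 m q j
          = (fun q : ℕ => if q ≤ i then PowerSeries.coeff (i - q : ℕ) D * s (q + j + 1)
              else 0) q := by
        intro q
        simp only [hL, hankel, Matrix.of_apply, ite_mul, zero_mul]
        rw [show 1 + (q : ℕ) + j = q + j + 1 by ring]
      rw [Finset.sum_congr rfl fun q _ => h2 q,
        Fin.sum_univ_eq_sum_range (fun q : ℕ =>
          if q ≤ i then PowerSeries.coeff (i - q : ℕ) D * s (q + j + 1) else 0) m,
        ← Finset.sum_subset hsub]
      · exact Finset.sum_congr rfl fun q hq =>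
          if_pos (by simpa [Nat.lt_succ_iff] using hq)
      · intro q _ hq
        exact if_neg (by simpa [Nat.lt_succ_iff] using hq)
    have h2 : PowerSeries.coeff (i + j : ℕ) E
        = ∑ q ∈ Finset.range j, PowerSeries.coeff (i + j - q : ℕ) D * s (q + 1)
          + (L * hankel s 1 m) i j := by
      rw [← h, mul_comm, PowerSeries.coeff_mul, Finset.Nat.sum_antidiagonal_eq_sum_range_succ_mk,
        show (i + j : ℕ).succ = j + (i + 1) by omega, Finset.sum_range_add, h1]
      congr 1
      · exact Finset.sum_congr rfl fun q _ => by simp [mul_comm]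
      · refine Finset.sum_congr rfl fun q _ => ?_
        simp only [PowerSeries.coeff_mk]
        rw [mul_comm, show (i + j - (j + q) : ℕ) = i - q by omega, add_comm (j : ℕ) q]
    rw [eq_comm, ← eq_sub_iff_add_eq'] at h2
    rw [h2]
    refine dvd_sub ?_ (Finset.dvd_sum fun q hq => ?_)
    · refine dvd_trans (pow_dvd_pow π ?_) (hE _)
      gcongr
      omega
    · refine Dvd.dvd.mul_right (dvd_trans (pow_dvd_pow π ?_) (hD _)) _
      rw [Finset.mem_range] at hq
      gcongr
      omega
  have hdet : (hankel s 1 m).det = (L * hankel s 1 m).det := by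
    rw [Matrix.det_mul, hLdet, one_mul]
  rw [hdet, Matrix.det_apply]
  refine Finset.dvd_sum fun σ _ => ?_
  rw [Units.smul_def, zsmul_eq_mul]
  refine Dvd.dvd.mul_left ?_ _
  rw [← Finset.prod_pow_eq_pow_sum, ← Fin.prod_univ_eq_prod_range (fun i => π ^ (c * i - b)),
    ← Equiv.prod_comp σ]
  exact Finset.prod_dvd_prod_of_dvd _ _ fun i _ => hrow (σ i) i

section Jacobi

variable {ι : Type*} [Fintype ι] [DecidableEq ι]

open Polynomial in
/-- Jacobi's formula. -/
lemma derivative_det (M : Matrix ι ι R[X]) :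
    derivative M.det = (M.adjugate * M.map derivative).trace := by
  have h1 : ∀ i, (M.adjugate * M.map derivative) i i
      = (M.updateCol i fun j => derivative (M j i)).det := by
    intro i
    rw [← Matrix.cramer_apply, Matrix.cramer_eq_adjugate_mulVec]
    rfl
  rw [Matrix.trace]
  simp only [Matrix.diag_apply, h1, Matrix.det_apply, map_sum, Units.smul_def, zsmul_eq_mul]
  rw [Finset.sum_comm]
  refine Finset.sum_congr rfl fun σ _ => ?_
  rw [← Finset.mul_sum, ← zsmul_eq_mul, map_zsmul, zsmul_eq_mul, derivative_prod_finset]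
  congr 1
  refine Finset.sum_congr rfl fun i _ => ?_
  rw [← Finset.prod_erase_mul _ _ (Finset.mem_univ i)]
  congr 1
  · refine Finset.prod_congr rfl fun j hj => ?_
    rw [Matrix.updateCol_ne (Finset.ne_of_mem_erase hj)]
  · rw [Matrix.updateCol_self]

open Polynomial in
/-- `det(1 - TA) · ∑ tr(A^{k+1}) T^k = - d/dT det(1 - TA)`. -/
lemma charpolyRev_mul_trace (A : Matrix ι ι R) :
    (A.charpolyRev : PowerSeries R) * PowerSeries.mk (fun k => (A ^ (k + 1)).trace)
      = -(derivative A.charpolyRev : R[X]) := by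
  set φ : R[X] →+* PowerSeries R := coeToPowerSeries.ringHom with hφ
  set N : Matrix ι ι R[X] := 1 - (X : R[X]) • A.map C with hN
  set G : Matrix ι ι (PowerSeries R) := Matrix.of fun i j => PowerSeries.mk fun k => (A ^ k) i j
    with hG
  have hNG : N.map φ * G = 1 := by
    ext i j k
    have h1 : (N.map φ * G) i j
        = G i j - PowerSeries.X * ∑ l, PowerSeries.C (A i l) * G l j := by
      have : N.map φ = 1 - (PowerSeries.X : PowerSeries R) • A.map PowerSeries.C := by
        ext1 a b
        by_cases hab : a = b
        · subst hab
          simp [hN, hφ]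
          ring
        · simp [hN, hφ, hab]
          ring
      rw [this, sub_mul, one_mul, Matrix.smul_mul, Matrix.sub_apply, Matrix.smul_apply,
        Matrix.mul_apply, smul_eq_mul]
      rfl
    rw [h1, map_sub]
    cases k with
    | zero => by_cases hij : i = j <;> simp [hG, hij, Matrix.one_apply]
    | succ k =>
      rw [PowerSeries.coeff_succ_X_mul, map_sum]
      simp only [PowerSeries.coeff_C_mul, hG, Matrix.of_apply, PowerSeries.coeff_mk]
      rw [pow_succ', Matrix.mul_apply, sub_self, Matrix.one_apply]
      split_ifs <;> simp [PowerSeries.coeff_one]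
  have hadj : N.adjugate.map φ = φ N.det • G := by
    have h2 : N.adjugate.map φ * N.map φ = φ N.det • (1 : Matrix ι ι (PowerSeries R)) := by
      rw [← Matrix.map_mul, Matrix.adjugate_mul]
      ext1 a b
      by_cases hab : a = b
      · subst hab
        simp
      · simp [hab]
    calc N.adjugate.map φ = N.adjugate.map φ * (N.map φ * G) := by rw [hNG, mul_one]
      _ = _ := by rw [← mul_assoc, h2, Matrix.smul_mul, one_mul]
  have hder : N.map derivative = -(A.map C) := by
    ext1 a b
    by_cases hab : a = b
    · subst hab
      simp [hN, derivative_mul]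
    · simp [hN, hab, derivative_mul]
  have hD : φ (derivative N.det) = -(φ N.det * (G * A.map PowerSeries.C).trace) := by
    rw [derivative_det, hder]
    have h3 : φ (N.adjugate * -(A.map C)).trace
        = -(N.adjugate.map φ * A.map PowerSeries.C).trace := by
      simp only [Matrix.trace, Matrix.diag_apply, Matrix.mul_apply, map_sum, map_mul,
        Matrix.neg_apply, Matrix.map_apply, map_neg, mul_neg, Finset.sum_neg_distrib]
      simp [hφ]
    rw [h3, hadj, Matrix.smul_mul, Matrix.trace_smul, smul_eq_mul]
  have htr : (G * A.map PowerSeries.C).trace = PowerSeries.mk (fun k => (A ^ (k + 1)).trace) := by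
    ext k
    simp [Matrix.trace, Matrix.mul_apply, hG, pow_succ]
  rw [htr] at hD
  change φ N.det * _ = -φ (derivative N.det)
  rw [hD, neg_neg]

/-- The determinant `det(1 - TA)` of a matrix whose entries are divisible by powers of `π` growing
with the weight of the row has rapidly decaying coefficients, uniformly in the size of `A`. -/
lemma dvd_coeff_charpolyRev {π : R} {p d c : ℕ} (hp : 2 ≤ p) (hd : 0 < d) (wt : ι → ℕ)
    (A : Matrix ι ι R) (e : ι → ι → ℕ) (he : ∀ u w, p * wt u ≤ wt w + d * e u w)
    (hA : ∀ u w, π ^ e u w ∣ A u w) {b : ℕ}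
    (hb : c * (Finset.univ.filter fun u => wt u < c * d).card ≤ b) (j : ℕ) :
    π ^ (c * j - b) ∣ A.charpolyRev.coeff j := by
  have hrev : A.charpolyRev = Matrix.det (1 + (Polynomial.X : Polynomial R) •
      (-A).map Polynomial.C) := by
    simp only [Matrix.charpolyRev, sub_eq_add_neg]
    congr 2
    rw [Matrix.map_neg Polynomial.C (map_neg Polynomial.C) A, smul_neg]
  rw [hrev, Matrix.coeff_det_one_add_X_smul_eq_sum_minors]
  refine Finset.dvd_sum fun S hS => ?_
  rw [Finset.mem_powersetCard] at hS
  rw [Matrix.det_apply]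
  refine Finset.dvd_sum fun σ _ => ?_
  rw [Units.smul_def, zsmul_eq_mul]
  refine Dvd.dvd.mul_left ?_ _
  have h1 : π ^ (∑ u : S, e (σ u) u)
      ∣ ∏ u : S, ((-A).submatrix (Subtype.val : S → ι) Subtype.val) (σ u) u := by
    rw [← Finset.prod_pow_eq_pow_sum]
    refine Finset.prod_dvd_prod_of_dvd _ _ fun u _ => ?_
    simpa using hA (σ u) u
  refine dvd_trans (pow_dvd_pow π ?_) h1
  have h2 : ∑ u : S, p * wt (σ u) ≤ ∑ u : S, wt u + d * ∑ u : S, e (σ u) u := by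
    rw [Finset.mul_sum, ← Finset.sum_add_distrib]
    exact Finset.sum_le_sum fun u _ => he _ _
  rw [← Finset.mul_sum, Equiv.sum_comp σ (fun u : S => wt u)] at h2
  have h3 : ∑ u : S, wt u ≤ d * ∑ u : S, e (σ u) u  := by
    have := Nat.mul_le_mul_right (∑ u : S, wt u) hp
    omega
  have h4 : (c * d) * (S.filter fun u => ¬ wt u < c * d).card ≤ ∑ u : S, wt u := by
    rw [Finset.sum_coe_sort S wt]
    calc (c * d) * (S.filter fun u => ¬ wt u < c * d).card
        = ∑ u ∈ S.filter (fun u => ¬ wt u < c * d), c * d := by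
          rw [Finset.sum_const, smul_eq_mul, mul_comm]
      _ ≤ ∑ u ∈ S.filter (fun u => ¬ wt u < c * d), wt u :=
          Finset.sum_le_sum fun u hu => by simpa using (Finset.mem_filter.mp hu).2
      _ ≤ ∑ u ∈ S, wt u :=
          Finset.sum_le_sum_of_subset (Finset.filter_subset _ _)
  have h5 := Finset.card_filter_add_card_filter_not (s := S) (fun u => wt u < c * d)
  rw [hS.2] at h5
  have h6 : (S.filter fun u => wt u < c * d).card
      ≤ (Finset.univ.filter fun u => wt u < c * d).card :=
    Finset.card_le_card (Finset.filter_subset_filter _ (Finset.subset_univ S))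
  have h7 : c * (S.filter fun u => ¬ wt u < c * d).card ≤ ∑ u : S, e (σ u) u := by
    have := h4.trans h3
    rw [mul_right_comm, mul_comm _ d] at this
    exact le_of_mul_le_mul_left this hd
  have h8 : c * (S.filter fun u => wt u < c * d).card ≤ b := (Nat.mul_le_mul_left c h6).trans hb
  have h9 : c * j = c * (S.filter fun u => wt u < c * d).card
      + c * (S.filter fun u => ¬ wt u < c * d).card := by
    rw [← mul_add, h5]
  omega

lemma decay_trace_pow {π : R} {p d c : ℕ} (hp : 2 ≤ p) (hd : 0 < d) (wt : ι → ℕ)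
    (A : Matrix ι ι R) (e : ι → ι → ℕ) (he : ∀ u w, p * wt u ≤ wt w + d * e u w)
    (hA : ∀ u w, π ^ e u w ∣ A u w) {b : ℕ}
    (hb : c * (Finset.univ.filter fun u => wt u < c * d).card ≤ b) :
    Decay π c b (fun k => (A ^ k).trace) := by
  have key := dvd_coeff_charpolyRev hp hd wt A e he hA hb
  refine ⟨A.charpolyRev, _, ?_, fun j => ?_, fun j => ?_, charpolyRev_mul_trace A⟩
  · rw [Polynomial.coeff_coe, Polynomial.coeff_zero_eq_eval_zero, Matrix.eval_charpolyRev]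
  · rw [Polynomial.coeff_coe]
    exact key j
  · rw [map_neg, dvd_neg, Polynomial.coeff_coe, Polynomial.coeff_derivative]
    refine Dvd.dvd.mul_right (dvd_trans (pow_dvd_pow π ?_) (key (j + 1))) _
    rw [mul_add]
    omega

end Jacobi

end Decay

end ExpSumDegree

/-! ### The Dwork trace formula -/

namespace ExpSumDegree

section TraceFormula

open MvPolynomial

variable {R : Type*} [CommRing R] {n : ℕ}

/-- The product `F(x) F(x^p) ⋯ F(x^{p^{k-1}})`. -/
noncomputable def frobProd (p : ℕ) (F : MvPolynomial (Fin n) R) : ℕ → MvPolynomial (Fin n) R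
  | 0 => 1
  | k + 1 => expand p (frobProd p F k) * F

lemma eval_frobProd (p : ℕ) (F : MvPolynomial (Fin n) R) (k : ℕ) (x : Fin n → R) :
    eval x (frobProd p F k) = ∏ i ∈ Finset.range k, eval (fun j => x j ^ p ^ i) F := by
  induction k generalizing x with
  | zero => simp [frobProd]
  | succ k ih =>
    rw [frobProd, map_mul, eval_expand, ih, Finset.prod_range_succ']
    congr 1
    · refine Finset.prod_congr rfl fun i _ => ?_
      congr 2
      ext j
      simp [pow_succ', pow_mul]
    · simp

lemma frobProd_degree_le {p B : ℕ} (hp : 2 ≤ p) {F : MvPolynomial (Fin n) R}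
    (hB : ∀ m, coeff m F ≠ 0 → ∀ i, m i ≤ (p - 1) * B) (k : ℕ) :
    ∀ m, coeff m (frobProd p F k) ≠ 0 → ∀ i, m i ≤ (p ^ k - 1) * B := by
  classical
  induction k with
  | zero =>
    intro m hm i
    rw [frobProd, coeff_one] at hm
    have : 0 = m := by
      by_contra h
      exact hm (if_neg h)
    simp [← this]
  | succ k ih =>
    intro m hm i
    rw [frobProd] at hm
    obtain ⟨a, ha, b, hb, rfl⟩ := Finset.mem_add.mp (support_mul _ _ (mem_support_iff.mpr hm))
    rw [support_expand _ (by omega), Finset.mem_image] at ha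
    obtain ⟨c, hc, rfl⟩ := ha
    have h1 := ih c (mem_support_iff.mp hc) i
    have h2 := hB b (mem_support_iff.mp hb) i
    obtain ⟨q, hq⟩ : ∃ q, p ^ k = q + 1 :=
      ⟨p ^ k - 1, (Nat.sub_add_cancel (Nat.one_le_pow _ _ (by omega))).symm⟩
    obtain ⟨p', rfl⟩ : ∃ p', p = p' + 1 := ⟨p - 1, by omega⟩
    rw [pow_succ, hq]
    rw [hq] at h1
    simp only [Nat.add_sub_cancel] at h1 h2
    have h3 : (q + 1) * (p' + 1) - 1 = q * (p' + 1) + p' := by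
      rw [add_mul, one_mul]
      omega
    rw [h3]
    simp only [Finsupp.coe_add, Finsupp.coe_smul, Pi.add_apply, Pi.smul_apply, smul_eq_mul]
    nlinarith [Nat.mul_le_mul_left (p' + 1) h1]

lemma coeff_expand_mul {p : ℕ} (hp : p ≠ 0) (G H : MvPolynomial (Fin n) R) (u : Fin n →₀ ℕ)
    (T : Finset (Fin n →₀ ℕ)) (hT : ∀ v ≤ u, coeff (p • v) H ≠ 0 → v ∈ T) :
    coeff (p • u) (expand p G * H)
      = ∑ v ∈ T, coeff u (monomial v 1 * G) * coeff (p • v) H := by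
  classical
  induction G using induction_on' with
  | monomial m r =>
    rw [expand_monomial, coeff_monomial_mul']
    simp only [monomial_mul, one_mul, coeff_monomial]
    by_cases hm : m ≤ u
    · have hm' : p • m ≤ p • u := fun i => Nat.mul_le_mul_left p (hm i)
      have hsub : p • u - p • m = p • (u - m) := by
        ext i
        simp [Nat.mul_sub]
      rw [if_pos hm', hsub]
      have h1 : ∀ v, v + m = u ↔ v = u - m := fun v =>
        ⟨fun h => by rw [← h, add_tsub_cancel_right], fun h => by rw [h, tsub_add_cancel_of_le hm]⟩
      simp only [h1, ite_mul, zero_mul, Finset.sum_ite_eq']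
      split_ifs with h2
      · rfl
      · have : coeff (p • (u - m)) H = 0 := by
          by_contra h3
          exact h2 (hT _ tsub_le_self h3)
        rw [this, mul_zero]
    · have hm' : ¬ p • m ≤ p • u := fun h => hm fun i =>
        Nat.le_of_mul_le_mul_left (by simpa using h i) (Nat.pos_of_ne_zero hp)
      rw [if_neg hm', Finset.sum_eq_zero]
      intro v _
      rw [if_neg, zero_mul]
      rintro rfl
      exact hm le_add_self
  | add G₁ G₂ h₁ h₂ =>
    rw [map_add, add_mul, coeff_add, h₁, h₂, ← Finset.sum_add_distrib]
    exact Finset.sum_congr rfl fun v _ => by rw [mul_add, coeff_add, add_mul]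

/-- The exponent vectors bounded by `B` and supported on `I`. -/
noncomputable def box (n B : ℕ) (I : Finset (Fin n)) : Finset (Fin n →₀ ℕ) :=
  Finset.Icc 0 (Finsupp.equivFunOnFinite.symm fun i => if i ∈ I then B else 0)

lemma mem_box {B : ℕ} {I : Finset (Fin n)} {u : Fin n →₀ ℕ} :
    u ∈ box n B I ↔ ∀ i, u i ≤ if i ∈ I then B else 0 := by
  simp [box, Finsupp.le_def]

/-- The matrix of Dwork's operator `g ↦ ψ(F g)`, where `ψ` keeps the monomials with exponents
divisible by `p` and divides these exponents by `p`, on the span of the monomials in a box. -/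
noncomputable def dworkMatrix (p : ℕ) (F : MvPolynomial (Fin n) R) (B : ℕ) (I : Finset (Fin n)) :
    Matrix (box n B I) (box n B I) R :=
  Matrix.of fun u w => coeff (p • (u : Fin n →₀ ℕ)) (monomial (w : Fin n →₀ ℕ) 1 * F)

lemma dworkMatrix_pow {p B : ℕ} (hp : 2 ≤ p) {F : MvPolynomial (Fin n) R}
    (hB : ∀ m, coeff m F ≠ 0 → ∀ i, m i ≤ (p - 1) * B) (I : Finset (Fin n)) (k : ℕ)
    (u w : box n B I) :
    (dworkMatrix p F B I ^ k) u w
      = coeff (p ^ k • (u : Fin n →₀ ℕ)) (monomial (w : Fin n →₀ ℕ) 1 * frobProd p F k) := by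
  classical
  induction k generalizing w with
  | zero =>
    simp only [pow_zero, frobProd, mul_one, one_smul, coeff_monomial, Matrix.one_apply]
    simp only [Subtype.ext_iff, eq_comm]
  | succ k ih =>
    have hT : ∀ v ≤ p ^ k • (u : Fin n →₀ ℕ),
        coeff (p • v) (monomial (w : Fin n →₀ ℕ) 1 * F) ≠ 0 → v ∈ box n B I := by
      intro v hv hne
      rw [coeff_monomial_mul'] at hne
      split_ifs at hne with hle
      swap
      · exact absurd rfl hne
      rw [one_mul] at hne
      rw [mem_box]
      intro i
      have h1 := hB _ hne i
      have h2 := mem_box.mp w.2 i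
      have h3 := mem_box.mp u.2 i
      have h4 := hv i
      have h5 := hle i
      simp only [Finsupp.coe_tsub, Finsupp.coe_smul, Pi.sub_apply, Pi.smul_apply, smul_eq_mul]
        at h1 h4 h5
      split_ifs at h2 h3 ⊢ with hi
      · obtain ⟨p', rfl⟩ : ∃ p', p = p' + 1 := ⟨p - 1, by omega⟩
        simp only [Nat.add_sub_cancel] at h1
        have h6 : (p' + 1) * v i ≤ (p' + 1) * B := by
          rw [add_mul p' 1 B, one_mul]
          omega
        exact Nat.le_of_mul_le_mul_left h6 (by omega)
      · have : (u : Fin n →₀ ℕ) i = 0 := by omega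
        rw [this, mul_zero] at h4
        exact h4
    rw [pow_succ, Matrix.mul_apply, frobProd, mul_left_comm, pow_succ', mul_smul,
      coeff_expand_mul (by omega) _ _ _ _ hT, ← Finset.sum_coe_sort (box n B I)]
    exact Finset.sum_congr rfl fun v _ => by rw [ih]; rfl

lemma dworkMatrix_trace {p B : ℕ} (hp : 2 ≤ p) {F : MvPolynomial (Fin n) R}
    (hB : ∀ m, coeff m F ≠ 0 → ∀ i, m i ≤ (p - 1) * B) (I : Finset (Fin n)) (k : ℕ) :
    (dworkMatrix p F B I ^ k).trace
      = ∑ u ∈ box n B I, coeff ((p ^ k - 1) • u) (frobProd p F k) := by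
  rw [Matrix.trace, ← Finset.sum_coe_sort (box n B I)]
  refine Finset.sum_congr rfl fun u _ => ?_
  rw [Matrix.diag_apply, dworkMatrix_pow hp hB]
  have : p ^ k • (u : Fin n →₀ ℕ) = u + (p ^ k - 1) • (u : Fin n →₀ ℕ) := by
    conv_lhs => rw [← Nat.sub_add_cancel (Nat.one_le_pow k p (by omega)), add_smul, one_smul,
      add_comm]
  rw [this, coeff_monomial_mul, one_mul]

/-- The Dwork trace formula: the sum of `F(x) F(x^p) ⋯ F(x^{p^{k-1}})` over Teichmüller points
is a combination of traces of `k`-th powers of fixed matrices. -/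
lemma sum_eval_frobProd {p B k : ℕ} (hp : 2 ≤ p) (hk : 1 ≤ k) {F : MvPolynomial (Fin n) R}
    (hB : ∀ m, coeff m F ≠ 0 → ∀ i, m i ≤ (p - 1) * B) {K : Type*} [Fintype K]
    (τ : K → R) (hτ : ∀ u : ℕ, ∑ a, τ a ^ u
      = (if p ^ k - 1 ∣ u then ((p ^ k - 1 : ℕ) : R) else 0) + (if u = 0 then 1 else 0)) :
    ∑ a : Fin n → K, eval (fun j => τ (a j)) (frobProd p F k)
      = ∑ I : Finset (Fin n), ((p ^ k - 1 : ℕ) : R) ^ I.card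
          * (dworkMatrix p F B I ^ k).trace := by
  classical
  have hq : 0 < p ^ k - 1 := by
    have : 1 < p ^ k := Nat.one_lt_pow (by omega) (by omega)
    omega
  set q := p ^ k - 1 with hqdef
  set G := frobProd p F k with hG
  have h1 : ∀ w : Fin n →₀ ℕ, ∑ a : Fin n → K, ∏ i, τ (a i) ^ w i
      = ∑ I : Finset (Fin n), (q : R) ^ I.card *
          if (∀ i ∈ I, q ∣ w i) ∧ ∀ i ∉ I, w i = 0 then 1 else 0 := by
    intro w
    rw [← Fintype.prod_sum (fun i a => τ a ^ w i)]
    simp only [hτ]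
    rw [Finset.prod_add, Finset.powerset_univ]
    refine Finset.sum_congr rfl fun I _ => ?_
    by_cases hI : (∀ i ∈ I, q ∣ w i) ∧ ∀ i ∉ I, w i = 0
    · rw [if_pos hI, Finset.prod_congr rfl fun i hi => if_pos (hI.1 i hi), Finset.prod_const,
        Finset.prod_eq_one fun i hi => if_pos (hI.2 i (by simpa using hi))]
    · rw [if_neg hI, mul_zero]
      rw [not_and_or] at hI
      push Not at hI
      rcases hI with ⟨i, hi, h⟩ | ⟨i, hi, h⟩
      · rw [Finset.prod_eq_zero hi (if_neg h), zero_mul]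
      · have h0 : ∏ i ∈ Finset.univ \ I, (if w i = 0 then (1 : R) else 0) = 0 :=
          Finset.prod_eq_zero (i := i) (by simp [hi]) (if_neg h)
        rw [h0, mul_zero]
  simp only [eval_eq']
  rw [Finset.sum_comm]
  simp only [← Finset.mul_sum, h1]
  simp only [Finset.mul_sum]
  rw [Finset.sum_comm]
  refine Finset.sum_congr rfl fun I _ => ?_
  rw [dworkMatrix_trace hp hB, Finset.mul_sum]
  have h2 : ∀ w, coeff w G * ((q : R) ^ I.card *
      if (∀ i ∈ I, q ∣ w i) ∧ ∀ i ∉ I, w i = 0 then 1 else 0)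
      = if (∀ i ∈ I, q ∣ w i) ∧ ∀ i ∉ I, w i = 0 then (q : R) ^ I.card * coeff w G else 0 := by
    intro w
    split_ifs <;> ring
  simp only [h2]
  rw [← Finset.sum_filter, ← hG, ← hqdef,
    ← Finset.sum_filter_of_ne (s := box n B I) (p := fun u => coeff (q • u) G ≠ 0)]
  swap
  · intro u _ hu h
    exact hu (by rw [h, mul_zero])
  symm
  refine Finset.sum_bij (fun u _ => q • u) ?_ ?_ ?_ fun _ _ => rfl
  · intro u hu
    simp only [Finset.mem_filter, mem_support_iff] at hu ⊢
    refine ⟨hu.2, fun i _ => by simp, fun i hi => ?_⟩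
    have := mem_box.mp hu.1 i
    rw [if_neg hi] at this
    simp only [Finsupp.coe_smul, Pi.smul_apply, smul_eq_mul]
    rw [Nat.le_zero.mp this, mul_zero]
  · intro u _ v _ h
    ext i
    have := DFunLike.congr_fun h i
    simp only [Finsupp.coe_smul, Pi.smul_apply, smul_eq_mul] at this
    exact Nat.eq_of_mul_eq_mul_left hq this
  · intro w hw
    simp only [Finset.mem_filter, mem_support_iff] at hw
    obtain ⟨hw0, hw1, hw2⟩ := hw
    have hdiv : ∀ i, q ∣ w i := fun i => by
      by_cases hi : i ∈ I
      · exact hw1 i hi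
      · rw [hw2 i hi]
        exact dvd_zero q
    have heq : q • (Finsupp.equivFunOnFinite.symm fun i => w i / q) = w := by
      ext i
      simp [Nat.mul_div_cancel' (hdiv i)]
    refine ⟨Finsupp.equivFunOnFinite.symm fun i => w i / q, ?_, heq⟩
    rw [Finset.mem_filter, heq]
    refine ⟨mem_box.mpr fun i => ?_, hw0⟩
    simp only [Finsupp.equivFunOnFinite_symm_apply_apply]
    split_ifs with hi
    · exact Nat.div_le_of_le_mul (frobProd_degree_le hp hB k w hw0 i)
    · simp [hw2 i hi]

/-- The coefficient of every monomial of degree `m` is divisible by `π ^ ⌈m / d⌉`. -/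
def Graded (π : R) (d : ℕ) (F : MvPolynomial (Fin n) R) : Prop :=
  ∀ w, π ^ ((w.degree + d - 1) / d) ∣ coeff w F

lemma ceil_add_le {d : ℕ} (hd : 0 < d) (a b : ℕ) :
    (a + b + d - 1) / d ≤ (a + d - 1) / d + (b + d - 1) / d := by
  have h1 := Nat.lt_mul_div_succ (a + d - 1) hd
  have h2 := Nat.lt_mul_div_succ (b + d - 1) hd
  rw [← Nat.lt_succ_iff, Nat.div_lt_iff_lt_mul hd]
  set x := (a + d - 1) / d
  set y := (b + d - 1) / d
  rw [Nat.succ_eq_add_one]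
  have e1 : d * (x + 1) = d * x + d := by ring
  have e2 : d * (y + 1) = d * y + d := by ring
  have e3 : (x + y + 1) * d = d * x + d * y + d := by ring
  omega

lemma le_mul_ceil {d : ℕ} (hd : 0 < d) (a : ℕ) : a ≤ d * ((a + d - 1) / d) := by
  have h1 := Nat.lt_mul_div_succ (a + d - 1) hd
  rw [mul_add, mul_one] at h1
  omega

lemma Graded.mul {π : R} {d : ℕ} (hd : 0 < d) {F G : MvPolynomial (Fin n) R}
    (hF : Graded π d F) (hG : Graded π d G) : Graded π d (F * G) := by
  classical
  intro w
  rw [coeff_mul]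
  refine Finset.dvd_sum fun x hx => ?_
  rw [Finset.HasAntidiagonal.mem_antidiagonal] at hx
  refine dvd_trans (pow_dvd_pow π ?_) ((pow_add π _ _).symm ▸ mul_dvd_mul (hF x.1) (hG x.2))
  rw [← hx, map_add]
  exact ceil_add_le hd _ _

lemma Graded.one (π : R) {d : ℕ} (hd : 0 < d) : Graded π d (1 : MvPolynomial (Fin n) R) := by
  classical
  intro w
  rw [coeff_one]
  split_ifs with h
  · subst h
    simp [Nat.div_eq_of_lt (show d - 1 < d by omega)]
  · exact dvd_zero _

lemma Graded.prod {ι : Type*} {π : R} {d : ℕ} (hd : 0 < d) (s : Finset ι)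
    {F : ι → MvPolynomial (Fin n) R} (hF : ∀ i ∈ s, Graded π d (F i)) :
    Graded π d (∏ i ∈ s, F i) :=
  Finset.prod_induction F (Graded π d) (fun _ _ h₁ h₂ => h₁.mul hd h₂) (Graded.one π hd) hF

/-- The bound `b` does not depend on `F`, only on `c`, `d` and the number of variables. -/
lemma decay_frobProd_sum {p d : ℕ} (hp : 2 ≤ p) (hd : 0 < d) (c : ℕ) {π : R}
    {F : MvPolynomial (Fin n) R} (hF : Graded π d F) (S : ℕ → R)
    (hS : ∀ k, 1 ≤ k → ∀ B, (∀ m, coeff m F ≠ 0 → ∀ i, m i ≤ (p - 1) * B) →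
      S k = ∑ I : Finset (Fin n), ((p ^ k - 1 : ℕ) : R) ^ I.card
          * (dworkMatrix p F B I ^ k).trace) :
    Decay π c (2 ^ n * ((n + 1) * (c * (c * d) ^ n))) S := by
  classical
  set B := F.totalDegree with hBdef
  have hB : ∀ m, coeff m F ≠ 0 → ∀ i, m i ≤ (p - 1) * B := by
    intro m hm i
    have h1 : m.degree ≤ B := le_totalDegree (mem_support_iff.mpr hm)
    have h2 : m i ≤ m.degree := Finsupp.le_degree i m
    calc m i ≤ 1 * B := by omega
      _ ≤ (p - 1) * B := Nat.mul_le_mul_right B (by omega)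
  have hsmall : ∀ I : Finset (Fin n),
      (Finset.univ.filter fun u : box n B I => (u : Fin n →₀ ℕ).degree < c * d).card
        ≤ (c * d) ^ n := by
    intro I
    have : (Fintype.piFinset fun _ : Fin n => Finset.range (c * d)).card = (c * d) ^ n := by
      simp
    rw [← this]
    refine Finset.card_le_card_of_injOn (fun u i => (u : Fin n →₀ ℕ) i) ?_ ?_
    · intro u hu
      simp only [Finset.coe_filter, Finset.mem_univ, true_and, Set.mem_ofPred_eq] at hu
      simp only [Finset.mem_coe, Fintype.mem_piFinset, Finset.mem_range]
      exact fun i => (Finsupp.le_degree i _).trans_lt hu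
    · intro u _ v _ h
      exact Subtype.ext (Finsupp.ext fun i => congrFun h i)
  have hdec : ∀ (I : Finset (Fin n)) (j : ℕ),
      Decay π c (c * (c * d) ^ n) (fun k => (((p : R) ^ j • dworkMatrix p F B I) ^ k).trace) := by
    intro I j
    refine decay_trace_pow hp hd (fun u : box n B I => (u : Fin n →₀ ℕ).degree) _
      (fun u w => (p * (u : Fin n →₀ ℕ).degree - (w : Fin n →₀ ℕ).degree + d - 1) / d) ?_ ?_
      (Nat.mul_le_mul_left c (hsmall I))
    · intro u w
      have := le_mul_ceil hd (p * (u : Fin n →₀ ℕ).degree - (w : Fin n →₀ ℕ).degree)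
      omega
    · intro u w
      rw [Matrix.smul_apply, smul_eq_mul]
      refine Dvd.dvd.mul_left ?_ _
      rw [dworkMatrix, Matrix.of_apply, coeff_monomial_mul']
      split_ifs with h
      · rw [one_mul]
        have hdeg : (p • (u : Fin n →₀ ℕ) - (w : Fin n →₀ ℕ)).degree
            = p * (u : Fin n →₀ ℕ).degree - (w : Fin n →₀ ℕ).degree := by
          have h1 : (p • (u : Fin n →₀ ℕ) - (w : Fin n →₀ ℕ)).degree + (w : Fin n →₀ ℕ).degree
              = p * (u : Fin n →₀ ℕ).degree := by
            rw [← map_add, tsub_add_cancel_of_le h, map_nsmul, smul_eq_mul]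
          omega
        rw [← hdeg]
        exact hF _
      · exact dvd_zero _
  have hI : ∀ I : Finset (Fin n), Decay π c ((n + 1) * (c * (c * d) ^ n))
      (fun k => ((p : R) ^ k - 1) ^ I.card * (dworkMatrix p F B I ^ k).trace) := by
    intro I
    have h1 := Decay.sum (Finset.range (n + 1)) fun j _ =>
      (hdec I j).mul_left ((-1) ^ (I.card - j) * (I.card.choose j : R))
    rw [Finset.card_range] at h1
    convert h1 using 1
    ext k
    have hcard : I.card + 1 ≤ n + 1 := by
      have := Finset.card_le_univ I
      simpa using this
    have h2 : ((p : R) ^ k - 1) ^ I.card = ∑ j ∈ Finset.range (n + 1),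
        ((p : R) ^ k) ^ j * (-1) ^ (I.card - j) * (I.card.choose j : R) := by
      rw [sub_eq_add_neg, add_pow]
      refine Finset.sum_subset (Finset.range_mono hcard) fun j _ hj => ?_
      rw [Finset.mem_range, not_lt] at hj
      rw [Nat.choose_eq_zero_of_lt (by omega)]
      simp
    rw [h2, Finset.sum_mul]
    refine Finset.sum_congr rfl fun j _ => ?_
    rw [smul_pow, Matrix.trace_smul, smul_eq_mul, ← pow_mul, ← pow_mul, mul_comm k j]
    ring
  have hall := Decay.sum (Finset.univ : Finset (Finset (Fin n))) fun I _ => hI I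
  rw [Finset.card_univ, Fintype.card_finset, Fintype.card_fin] at hall
  obtain ⟨D, E, h0, hD, hE, h⟩ := hall
  refine ⟨D, E, h0, hD, hE, ?_⟩
  rw [← h]
  congr 2
  ext k
  rw [hS (k + 1) (by omega) B hB]
  refine Finset.sum_congr rfl fun I _ => ?_
  rw [Nat.cast_sub (Nat.one_le_pow _ _ (by omega))]
  push_cast
  rfl

end TraceFormula

end ExpSumDegree

/-! ### Logarithmic derivatives and a Möbius identity -/

namespace ExpSumDegree

section LogDerivative

open PowerSeries

variable {A : Type*} [CommRing A]

/-- `u` is the logarithmic derivative `X U' / U`. -/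
def LogDer (U u : A⟦X⟧) : Prop := X * d⁄dX A U = U * u

lemma LogDer.mul {U V u v : A⟦X⟧} (hU : LogDer U u) (hV : LogDer V v) :
    LogDer (U * V) (u + v) := by
  unfold LogDer at *
  rw [Derivation.leibniz, smul_eq_mul, smul_eq_mul]
  linear_combination V * hU + U * hV

lemma LogDer.one : LogDer (1 : A⟦X⟧) 0 := by
  simp [LogDer]

lemma LogDer.pow {U u : A⟦X⟧} (hU : LogDer U u) (e : ℕ) : LogDer (U ^ e) (e • u) := by
  induction e with
  | zero => simpa using LogDer.one
  | succ e ih =>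
    rw [pow_succ, succ_nsmul]
    exact ih.mul hU

lemma LogDer.prod {ι : Type*} (s : Finset ι) {U u : ι → A⟦X⟧} (h : ∀ i ∈ s, LogDer (U i) (u i)) :
    LogDer (∏ i ∈ s, U i) (∑ i ∈ s, u i) := by
  classical
  induction s using Finset.induction_on with
  | empty => simpa using LogDer.one
  | insert a s ha ih =>
    rw [Finset.prod_insert ha, Finset.sum_insert ha]
    exact (h a (Finset.mem_insert_self a s)).mul
      (ih fun i hi => h i (Finset.mem_insert_of_mem hi))

/-- The series `∑_{j ≥ 1} c ^ j X ^ (N j)`. -/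
noncomputable def geomSeries (c : A) (N : ℕ) : A⟦X⟧ :=
  PowerSeries.mk fun m => if N ∣ m ∧ m ≠ 0 then c ^ (m / N) else 0

lemma logDer_one_sub (c : A) {N : ℕ} (hN : 0 < N) :
    LogDer (1 - C c * X ^ N : A⟦X⟧) (-((N : A⟦X⟧) * geomSeries c N)) := by
  have key : (1 - C c * X ^ N) * geomSeries c N = C c * X ^ N := by
    ext m
    rw [sub_mul, one_mul, mul_assoc, map_sub, coeff_C_mul, coeff_X_pow_mul', coeff_C_mul,
      coeff_X_pow, geomSeries]
    simp only [coeff_mk]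
    by_cases hmN : N ≤ m
    · obtain ⟨j, rfl⟩ := Nat.exists_eq_add_of_le hmN
      rw [if_pos hmN, Nat.add_sub_cancel_left]
      have h1 : N ∣ N + j ↔ N ∣ j := by simp
      by_cases hj : N ∣ j
      · rw [if_pos ⟨h1.mpr hj, by omega⟩, Nat.add_div_left _ hN]
        by_cases hj0 : j = 0
        · subst hj0
          simp
        · rw [if_pos ⟨hj, hj0⟩, if_neg (by omega), pow_succ]
          ring
      · rw [if_neg (fun h => hj (h1.mp h.1)), if_neg (fun h => hj h.1), if_neg]
        · simp
        · rintro h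
          apply hj
          rw [show j = 0 by omega]
          exact dvd_zero N
    · rw [if_neg hmN, if_neg, if_neg (by omega)]
      · simp
      · rintro ⟨h, h0⟩
        exact hmN (Nat.le_of_dvd (by omega) h)
  unfold LogDer
  have hd : X * d⁄dX A (1 - C c * X ^ N : A⟦X⟧) = -((N : A⟦X⟧) * (C c * X ^ N)) := by
    rw [map_sub, derivative_one, Derivation.leibniz, derivative_C, derivative_pow, derivative_X]
    obtain ⟨N, rfl⟩ : ∃ N', N = N' + 1 := ⟨N - 1, by omega⟩
    simp only [smul_eq_mul, Nat.add_sub_cancel]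
    ring
  rw [hd]
  linear_combination (N : A⟦X⟧) * key

/-- Solving the recursion `n U_n = ∑ U_i u_{n-i}` loses only the factor `n!`. -/
lemma LogDer.factorial_mul_dvd {U V u v : A⟦X⟧} (hU : LogDer U u) (hV : LogDer V v)
    (h0 : coeff 0 U = coeff 0 V) (hu0 : coeff 0 u = 0) (hv0 : coeff 0 v = 0) {x : A} {J : ℕ}
    (h : ∀ m, 0 < m → m < J → x ∣ coeff m u - coeff m v) :
    ∀ m < J, x ∣ (m.factorial : A) * (coeff m U - coeff m V) := by
  have hrec : ∀ {U u : A⟦X⟧}, LogDer U u → coeff 0 u = 0 → ∀ m,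
      ((m + 1 : ℕ) : A) * coeff (m + 1) U
        = ∑ i ∈ Finset.range (m + 1), coeff i U * coeff (m + 1 - i) u := by
    intro U u hU h0 m
    have := congrArg (coeff (m + 1)) hU
    rw [coeff_succ_X_mul, coeff_derivative, coeff_mul,
      Finset.Nat.sum_antidiagonal_eq_sum_range_succ (fun i j => coeff i U * coeff j u),
      Finset.sum_range_succ, Nat.sub_self, h0, mul_zero, add_zero] at this
    rw [← this]
    push_cast
    ring
  intro m
  induction m using Nat.strong_induction_on with
  | _ m ih =>
    intro hm
    rcases m with _ | m
    · simp [h0]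
    have e : ((m + 1).factorial : A) * (coeff (m + 1) U - coeff (m + 1) V)
        = ∑ i ∈ Finset.range (m + 1), (m.factorial : A) *
          ((coeff i U - coeff i V) * coeff (m + 1 - i) u
            + coeff i V * (coeff (m + 1 - i) u - coeff (m + 1 - i) v)) := by
      rw [← Finset.mul_sum, Nat.factorial_succ, Nat.cast_mul, mul_comm ((m + 1 : ℕ) : A), mul_assoc,
        mul_sub, hrec hU hu0, hrec hV hv0, ← Finset.sum_sub_distrib]
      congr 1
      refine Finset.sum_congr rfl fun i _ => ?_
      ring
    rw [e]
    refine Finset.dvd_sum fun i hi => ?_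
    rw [Finset.mem_range] at hi
    rw [mul_add]
    refine dvd_add ?_ ?_
    · obtain ⟨q, hq⟩ := Nat.factorial_dvd_factorial (show i ≤ m by omega)
      rw [hq, Nat.cast_mul]
      refine ((ih i hi (by omega)).mul_right ((q : A) * coeff (m + 1 - i) u)).trans
        (dvd_of_eq (by ring))
    · exact ((h (m + 1 - i) (by omega) (by omega)).mul_left _).mul_left _

end LogDerivative

section Moebius

open ArithmeticFunction

/-- `∑_{N r = n} ∑_{l m = N} μ(l) H(l r) = H(1)`. -/
lemma sum_moebius_twist {A : Type*} [CommRing A] (H : ℕ → A) {n : ℕ} (hn : n ≠ 0) :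
    ∑ N ∈ n.divisors, ∑ l ∈ N.divisors, ((moebius l : ℤ) : A) * H (l * (n / N)) = H 1 := by
  have h1 : ∑ N ∈ n.divisors, ∑ l ∈ N.divisors, ((moebius l : ℤ) : A) * H (l * (n / N))
      = ∑ x ∈ n.divisorsAntidiagonal, ∑ y ∈ x.1.divisorsAntidiagonal,
          ((moebius y.1 : ℤ) : A) * H (y.1 * x.2) := by
    rw [Nat.sum_divisorsAntidiagonal (fun N r => ∑ y ∈ N.divisorsAntidiagonal,
          ((moebius y.1 : ℤ) : A) * H (y.1 * r))]
    refine Finset.sum_congr rfl fun N _ => ?_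
    rw [Nat.sum_divisorsAntidiagonal (fun l _ => ((moebius l : ℤ) : A) * H (l * (n / N)))]
  have h2 : ∑ x ∈ n.divisorsAntidiagonal, ∑ y ∈ x.1.divisorsAntidiagonal,
          ((moebius y.1 : ℤ) : A) * H (y.1 * x.2)
      = ∑ x ∈ n.divisorsAntidiagonal, ∑ y ∈ x.1.divisorsAntidiagonal,
          ((moebius y.1 : ℤ) : A) * H (y.1 * y.2) := by
    rw [Finset.sum_sigma', Finset.sum_sigma']
    refine Finset.sum_nbij' (fun z => ⟨(z.2.1 * z.1.2, z.2.2), (z.2.1, z.1.2)⟩)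
      (fun z => ⟨(z.2.1 * z.1.2, z.2.2), (z.2.1, z.1.2)⟩) ?_ ?_ ?_ ?_ ?_
    · rintro ⟨⟨N, r⟩, ⟨l, m⟩⟩ h
      simp only [Finset.mem_sigma, Nat.mem_divisorsAntidiagonal] at h ⊢
      obtain ⟨⟨rfl, h0⟩, rfl, h3⟩ := h
      exact ⟨⟨by ring, h0⟩, trivial, mul_ne_zero (left_ne_zero_of_mul h3) (right_ne_zero_of_mul h0)⟩
    · rintro ⟨⟨N, r⟩, ⟨l, m⟩⟩ h
      simp only [Finset.mem_sigma, Nat.mem_divisorsAntidiagonal] at h ⊢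
      obtain ⟨⟨rfl, h0⟩, rfl, h3⟩ := h
      exact ⟨⟨by ring, h0⟩, trivial, mul_ne_zero (left_ne_zero_of_mul h3) (right_ne_zero_of_mul h0)⟩
    · rintro ⟨⟨N, r⟩, ⟨l, m⟩⟩ h
      simp only [Finset.mem_sigma, Nat.mem_divisorsAntidiagonal] at h
      obtain ⟨⟨rfl, h0⟩, rfl, h3⟩ := h
      rfl
    · rintro ⟨⟨N, r⟩, ⟨l, m⟩⟩ h
      simp only [Finset.mem_sigma, Nat.mem_divisorsAntidiagonal] at h
      obtain ⟨⟨rfl, h0⟩, rfl, h3⟩ := h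
      rfl
    · rintro ⟨⟨N, r⟩, ⟨l, m⟩⟩ _
      rfl
  have h3 : ∀ N : ℕ, ∑ y ∈ N.divisorsAntidiagonal, ((moebius y.1 : ℤ) : A)
      = if N = 1 then 1 else 0 := by
    intro N
    have := DFunLike.congr_fun moebius_mul_coe_zeta N
    rw [mul_apply, one_apply] at this
    have h4 : ∑ y ∈ N.divisorsAntidiagonal, (moebius y.1 : ℤ) = if N = 1 then 1 else 0 := by
      rw [← this]
      refine Finset.sum_congr rfl fun y hy => ?_
      have : y.2 ≠ 0 := (Nat.ne_zero_of_mem_divisorsAntidiagonal hy).2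
      simp [natCoe_apply, zeta_apply, this]
    rw [← Int.cast_sum, h4]
    split_ifs <;> simp
  rw [h1, h2]
  have h5 : ∀ x ∈ n.divisorsAntidiagonal, ∑ y ∈ x.1.divisorsAntidiagonal,
      ((moebius y.1 : ℤ) : A) * H (y.1 * y.2) = if x.1 = 1 then H 1 else 0 := by
    intro x _
    rw [Finset.sum_congr rfl fun y hy => by rw [(Nat.mem_divisorsAntidiagonal.mp hy).1],
      ← Finset.sum_mul, h3]
    split_ifs with h
    · rw [h, one_mul]
    · rw [zero_mul]
  rw [Finset.sum_congr rfl h5, Nat.sum_divisorsAntidiagonal (fun N _ => if N = 1 then H 1 else 0),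
    Finset.sum_ite_eq' _ 1, if_pos (by simpa using hn)]

end Moebius

end ExpSumDegree

/-! ### An approximate power `(1 - X)^T` -/

namespace ExpSumDegree

section Splitting

open ArithmeticFunction

lemma exists_mul_moebius {p : ℕ} (hp : p.Prime) (K : ℕ) :
    ∃ e : ℕ → ℕ → ℕ, ∀ N l, ¬ p ∣ N → (p : ℤ) ^ K ∣ (N : ℤ) * e N l - moebius l := by
  have : NeZero (p ^ K) := ⟨pow_ne_zero _ hp.ne_zero⟩
  refine ⟨fun N l => ((N : ZMod (p ^ K))⁻¹ * ((moebius l : ℤ) : ZMod (p ^ K))).val,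
    fun N l hN => ?_⟩
  have h1 : ((p ^ K : ℕ) : ℤ) ∣ (N : ℤ) *
      (((N : ZMod (p ^ K))⁻¹ * ((moebius l : ℤ) : ZMod (p ^ K))).val : ℕ) - moebius l := by
    rw [← ZMod.intCast_zmod_eq_zero_iff_dvd]
    push_cast
    rw [ZMod.natCast_zmod_val, ← mul_assoc, ZMod.coe_mul_inv_eq_one, one_mul, sub_self]
    exact Nat.Coprime.pow_right K ((Nat.Prime.coprime_iff_not_dvd hp).mpr hN).symm
  exact_mod_cast h1

/-- The indices `0 < N < J` prime to `p`. -/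
def primeToP (p J : ℕ) : Finset ℕ := (Finset.range J).filter fun N => ¬ p ∣ N

lemma filter_primeToP {p : ℕ} (hp : p.Prime) {J v n' : ℕ} (hn' : ¬ p ∣ n')
    (h : p ^ v * n' < J) :
    (primeToP p J).filter (fun N => N ∣ p ^ v * n') = n'.divisors := by
  have hn0 : n' ≠ 0 := by
    rintro rfl
    exact hn' (dvd_zero p)
  ext N
  simp only [primeToP, Finset.mem_filter, Finset.mem_range, Nat.mem_divisors]
  constructor
  · rintro ⟨⟨_, h2⟩, h3⟩
    refine ⟨?_, hn0⟩
    exact (Nat.Coprime.pow_right v ((Nat.Prime.coprime_iff_not_dvd hp).mpr h2).symm).dvd_of_dvd_mul_left h3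
  · rintro ⟨h1, _⟩
    refine ⟨⟨?_, fun h2 => hn' (h2.trans h1)⟩, h1.mul_left _⟩
    refine lt_of_le_of_lt (Nat.le_of_dvd (Nat.pos_of_ne_zero ?_) (h1.mul_left _)) h
    exact mul_ne_zero (pow_ne_zero _ hp.ne_zero) hn0

variable {A : Type*} [CommRing A]

/-- The polynomial `∏_i ∏_N ∏_{l ∣ N} (1 - t^{p^i l} X^N)^{e(N,l)}`, an approximation of
`(1 - X)^{t + t^p + ⋯}` when `N e(N,l)` approximates `μ(l)`. -/
noncomputable def splitPoly (p J : ℕ) (e : ℕ → ℕ → ℕ) (t : A) (k : ℕ) : Polynomial A :=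
  ∏ i ∈ Finset.range k, ∏ N ∈ primeToP p J, ∏ l ∈ N.divisors,
    (1 - Polynomial.C ((t ^ p ^ i) ^ l) * Polynomial.X ^ N) ^ e N l

/-- The logarithmic derivative of `splitPoly`. -/
noncomputable def splitLog (p J : ℕ) (e : ℕ → ℕ → ℕ) (t : A) (k : ℕ) : PowerSeries A :=
  ∑ i ∈ Finset.range k, ∑ N ∈ primeToP p J, ∑ l ∈ N.divisors,
    e N l • (-((N : PowerSeries A) * geomSeries ((t ^ p ^ i) ^ l) N))

lemma pos_of_mem_primeToP {p J N : ℕ} (h : N ∈ primeToP p J) : 0 < N := by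
  rw [primeToP, Finset.mem_filter] at h
  refine Nat.pos_of_ne_zero ?_
  rintro rfl
  exact h.2 (dvd_zero p)

lemma logDer_splitPoly (p J : ℕ) (e : ℕ → ℕ → ℕ) (t : A) (k : ℕ) :
    LogDer (splitPoly p J e t k : PowerSeries A) (splitLog p J e t k) := by
  have hcoe : (splitPoly p J e t k : PowerSeries A)
      = ∏ i ∈ Finset.range k, ∏ N ∈ primeToP p J, ∏ l ∈ N.divisors,
        (1 - PowerSeries.C ((t ^ p ^ i) ^ l) * PowerSeries.X ^ N) ^ e N l := by
    rw [← Polynomial.coeToPowerSeries.ringHom_apply, splitPoly]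
    simp only [map_prod, map_pow, map_sub, map_one, map_mul,
      Polynomial.coeToPowerSeries.ringHom_apply, Polynomial.coe_C, Polynomial.coe_X]
  rw [hcoe]
  exact LogDer.prod _ fun i _ => LogDer.prod _ fun N hN => LogDer.prod _ fun l _ =>
    (logDer_one_sub _ (pos_of_mem_primeToP hN)).pow _

lemma coeff_splitLog (p J : ℕ) (e : ℕ → ℕ → ℕ) (t : A) (k m : ℕ) :
    PowerSeries.coeff m (splitLog p J e t k)
      = -∑ N ∈ primeToP p J, ∑ l ∈ N.divisors, ((N : A) * e N l) *
          if N ∣ m ∧ m ≠ 0 then ∑ i ∈ Finset.range k, t ^ (p ^ i * (l * (m / N))) else 0 := by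
  rw [splitLog]
  rw [Finset.sum_comm, map_sum, ← Finset.sum_neg_distrib]
  refine Finset.sum_congr rfl fun N _ => ?_
  rw [Finset.sum_comm, map_sum, ← Finset.sum_neg_distrib]
  refine Finset.sum_congr rfl fun l _ => ?_
  rw [map_sum]
  have h : ∀ i, PowerSeries.coeff m
      (e N l • (-((N : PowerSeries A) * geomSeries ((t ^ p ^ i) ^ l) N)))
      = -(((N : A) * e N l) * if N ∣ m ∧ m ≠ 0 then t ^ (p ^ i * (l * (m / N))) else 0) := by
    intro i
    rw [map_nsmul, map_neg, ← nsmul_eq_mul, map_nsmul, geomSeries, PowerSeries.coeff_mk,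
      nsmul_eq_mul, nsmul_eq_mul, ← pow_mul, ← pow_mul]
    ring
  simp only [h]
  rw [Finset.sum_neg_distrib, ← Finset.mul_sum]
  split_ifs
  · rfl
  · simp

lemma dvd_coeff_splitLog {p : ℕ} (hp : p.Prime) {J K : ℕ} {e : ℕ → ℕ → ℕ}
    (he : ∀ N l, ¬ p ∣ N → (p : ℤ) ^ K ∣ (N : ℤ) * e N l - moebius l) {t : A} {k : ℕ}
    (ht : t ^ p ^ k = t) {m : ℕ} (hm0 : 0 < m) (hm : m < J) :
    (p : A) ^ K ∣ PowerSeries.coeff m (splitLog p J e t k)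
      - -∑ i ∈ Finset.range k, t ^ p ^ i := by
  set H : ℕ → A := fun j => ∑ i ∈ Finset.range k, t ^ (p ^ i * j) with hH
  have hHp : ∀ j, H (p * j) = H j := by
    intro j
    have h1 : H (p * j) = ∑ i ∈ Finset.range k, t ^ (p ^ (i + 1) * j) := by
      rw [hH]
      refine Finset.sum_congr rfl fun i _ => ?_
      rw [pow_succ, mul_assoc]
    have h2 := Finset.sum_range_succ (fun i => t ^ (p ^ i * j)) k
    rw [Finset.sum_range_succ', pow_zero, one_mul, pow_mul t (p ^ k), ht] at h2
    rw [h1]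
    exact add_right_cancel h2
  have hHpv : ∀ v j, H (p ^ v * j) = H j := by
    intro v j
    induction v with
    | zero => simp
    | succ v ih => rw [pow_succ', mul_assoc, hHp, ih]
  obtain ⟨v, n', hn', rfl⟩ := Nat.exists_eq_pow_mul_and_not_dvd hm0.ne' p hp.ne_one
  have hn0 : n' ≠ 0 := by
    rintro rfl
    exact hn' (dvd_zero p)
  have hmain : ∑ N ∈ primeToP p J, ∑ l ∈ N.divisors, ((moebius l : ℤ) : A) *
          (if N ∣ p ^ v * n' ∧ p ^ v * n' ≠ 0 then H (l * (p ^ v * n' / N)) else 0) = H 1 := by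
    rw [← sum_moebius_twist H hn0, ← filter_primeToP hp hn' hm, Finset.sum_filter]
    refine Finset.sum_congr rfl fun N hN => ?_
    by_cases h1 : N ∣ p ^ v * n'
    · rw [if_pos h1]
      refine Finset.sum_congr rfl fun l _ => ?_
      rw [if_pos ⟨h1, hm0.ne'⟩]
      have hN' : N ∣ n' := by
        have : N ∈ n'.divisors := by
          rw [← filter_primeToP hp hn' hm, Finset.mem_filter]
          exact ⟨hN, h1⟩
        exact Nat.dvd_of_mem_divisors this
      rw [Nat.mul_div_assoc _ hN', mul_left_comm, hHpv]
    · rw [if_neg h1]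
      refine Finset.sum_eq_zero fun l _ => ?_
      rw [if_neg (fun h => h1 h.1), mul_zero]
  have hH1 : ∑ i ∈ Finset.range k, t ^ p ^ i = H 1 := by simp [hH]
  rw [coeff_splitLog, hH1, ← hmain, ← neg_sub', dvd_neg, ← Finset.sum_sub_distrib]
  refine Finset.dvd_sum fun N hN => ?_
  rw [← Finset.sum_sub_distrib]
  refine Finset.dvd_sum fun l _ => ?_
  rw [← sub_mul]
  refine Dvd.dvd.mul_right ?_ _
  rw [primeToP, Finset.mem_filter] at hN
  have := map_dvd (Int.castRingHom A) (he N l hN.2)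
  simpa using this

lemma coeff_zero_splitPoly (p J : ℕ) (e : ℕ → ℕ → ℕ) (t : A) (k : ℕ) :
    (splitPoly p J e t k).coeff 0 = 1 := by
  rw [Polynomial.coeff_zero_eq_eval_zero, splitPoly]
  simp only [Polynomial.eval_prod]
  refine Finset.prod_eq_one fun i _ => Finset.prod_eq_one fun N hN =>
    Finset.prod_eq_one fun l _ => ?_
  simp [(pos_of_mem_primeToP hN).ne']

/-- Comparison of the coefficients of `splitPoly` with those of `(1 - X)^T`. -/
lemma factorial_mul_splitPoly {p : ℕ} (hp : p.Prime) {J K : ℕ} {e : ℕ → ℕ → ℕ}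
    (he : ∀ N l, ¬ p ∣ N → (p : ℤ) ^ K ∣ (N : ℤ) * e N l - moebius l) {t : A} {k : ℕ}
    (ht : t ^ p ^ k = t) {T : ℕ} (hT : (p : A) ^ K ∣ ∑ i ∈ Finset.range k, t ^ p ^ i - T)
    {m : ℕ} (hm : m < J) :
    (p : A) ^ K ∣ (m.factorial : A) *
      ((splitPoly p J e t k).coeff m - ((1 - Polynomial.X : Polynomial A) ^ T).coeff m) := by
  have hV : LogDer (((1 - Polynomial.X : Polynomial A) ^ T : Polynomial A) : PowerSeries A)
      (T • (-(((1 : ℕ) : PowerSeries A) * geomSeries 1 1))) := by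
    have h := (logDer_one_sub (1 : A) one_pos).pow T
    rwa [map_one, one_mul, pow_one, ← Polynomial.coe_X, ← Polynomial.coe_one,
      ← Polynomial.coe_sub, ← Polynomial.coe_pow] at h
  have h := (logDer_splitPoly p J e t k).factorial_mul_dvd hV (x := (p : A) ^ K) (J := J)
    (by rw [Polynomial.coeff_coe, Polynomial.coeff_coe, coeff_zero_splitPoly,
      Polynomial.coeff_zero_eq_eval_zero]; simp)
    (by simp [coeff_splitLog]) (by simp [geomSeries]) ?_ m hm
  · rwa [Polynomial.coeff_coe, Polynomial.coeff_coe] at h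
  · intro m hm0 hm
    have h1 := dvd_coeff_splitLog hp he ht hm0 hm
    have h2 : PowerSeries.coeff m (T • (-(((1 : ℕ) : PowerSeries A) * geomSeries (1 : A) 1)))
        = -(T : A) := by
      simp [geomSeries, hm0.ne', -nsmul_eq_mul, -smul_eq_mul]
    rw [h2]
    have := dvd_sub h1 hT
    convert this using 1
    ring

end Splitting

end ExpSumDegree

/-! ### Witt vectors and the splitting function -/

namespace ExpSumDegree

section Witt

variable (p : ℕ) [Fact p.Prime]

/-- The Witt vectors of an algebraic closure of `𝔽_p`. -/
abbrev Wp : Type := WittVector p (AlgebraicClosure (ZMod p))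

variable {p}

lemma Wp.p_ne_zero : (p : Wp p) ≠ 0 := WittVector.p_nonzero p _

lemma Wp.p_dvd {y : Wp p} (h : y.coeff 0 = 0) : (p : Wp p) ∣ y := by
  have h1 : y = WittVector.verschiebung (y.shift 1) := by
    have := WittVector.verschiebung_shift y 0 (by
      intro i hi
      rw [show i = 0 by omega]
      exact h)
    simpa [WittVector.shift] using this.symm
  obtain ⟨z, hz⟩ := (WittVector.frobenius_bijective p (AlgebraicClosure (ZMod p))).2 (y.shift 1)
  rw [h1, ← hz, WittVector.verschiebung_frobenius]
  exact dvd_mul_left _ _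

lemma Wp.coeff_zero_eq_constantCoeff (y : Wp p) : y.coeff 0 = WittVector.constantCoeff y := rfl

lemma Wp.coeff_zero_natCast (a : ℕ) : (a : Wp p).coeff 0 = (a : AlgebraicClosure (ZMod p)) := by
  rw [Wp.coeff_zero_eq_constantCoeff, map_natCast]

/-- The Frobenius invariants of the Witt vectors lie in the `p`-adic closure of `ℕ`. -/
lemma Wp.exists_nat (M : ℕ) : ∀ y : Wp p, WittVector.frobenius y = y →
    ∃ T : ℕ, (p : Wp p) ^ M ∣ y - T := by
  induction M with
  | zero => exact fun y _ => ⟨0, by simp⟩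
  | succ M ih =>
    intro y hy
    have h1 : y.coeff 0 ^ p = y.coeff 0 := by
      conv_rhs => rw [← hy]
      rw [WittVector.coeff_frobenius_charP]
    obtain ⟨c, hc⟩ : ∃ c : ZMod p, algebraMap (ZMod p) (AlgebraicClosure (ZMod p)) c
        = y.coeff 0 := by
      obtain ⟨a, ha⟩ := (mem_bot_iff_intCast p _).mp
        ((Subfield.mem_bot_iff_pow_eq_self _ p).mpr h1)
      exact ⟨a, by rw [map_intCast, ha]⟩
    have h3 : (y - (c.val : Wp p)).coeff 0 = 0 := by
      rw [Wp.coeff_zero_eq_constantCoeff, map_sub, map_natCast,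
        ← Wp.coeff_zero_eq_constantCoeff, ← hc, sub_eq_zero]
      conv_lhs => rw [← ZMod.natCast_zmod_val c, map_natCast]
    obtain ⟨z, hz⟩ := Wp.p_dvd h3
    have hz' : WittVector.frobenius z = z := by
      have := congrArg WittVector.frobenius hz
      rw [map_sub, map_mul, map_natCast, map_natCast, hy, hz] at this
      exact (mul_left_cancel₀ Wp.p_ne_zero this).symm
    obtain ⟨T, w, hw⟩ := ih z hz'
    refine ⟨c.val + p * T, w, ?_⟩
    push_cast
    rw [pow_succ]
    linear_combination hz + (p : Wp p) * hw

lemma Wp.isUnit_natCast {a : ℕ} (h : ¬ p ∣ a) : IsUnit (a : Wp p) := by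
  refine WittVector.isUnit_of_coeff_zero_ne_zero _ ?_
  rw [Wp.coeff_zero_natCast]
  rwa [Ne, CharP.cast_eq_zero_iff _ p]

lemma Wp.dvd_of_factorial_mul {M J m : ℕ} (hm : m < J) {y : Wp p}
    (h : (p : Wp p) ^ (J + M) ∣ (m.factorial : Wp p) * y) : (p : Wp p) ^ M ∣ y := by
  have hp : p.Prime := Fact.out
  obtain ⟨v, a, ha, hva⟩ := Nat.exists_eq_pow_mul_and_not_dvd m.factorial_ne_zero p hp.ne_one
  have hv : v ≤ J := by
    have h1 : v ≤ padicValNat p m.factorial :=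
      (padicValNat_dvd_iff_le m.factorial_ne_zero).mp ⟨a, hva⟩
    exact (h1.trans (padicValNat_factorial_le p m)).trans hm.le
  rw [hva, Nat.cast_mul, Nat.cast_pow, mul_assoc] at h
  have h1 : (p : Wp p) ^ v * (p : Wp p) ^ M ∣ (p : Wp p) ^ v * ((a : Wp p) * y) := by
    rw [← pow_add]
    exact (pow_dvd_pow _ (by omega)).trans h
  exact ((Wp.isUnit_natCast ha).dvd_mul_left).mp
    ((mul_dvd_mul_iff_left (pow_ne_zero v Wp.p_ne_zero)).mp h1)

lemma Wp.frobenius_teichmuller (x : AlgebraicClosure (ZMod p)) :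
    WittVector.frobenius (WittVector.teichmuller p x) = WittVector.teichmuller p x ^ p := by
  rw [WittVector.frobenius_eq_map_frobenius, WittVector.map_teichmuller, frobenius_def, map_pow]

end Witt

section SplittingRing

open Polynomial

variable (p : ℕ) [Fact p.Prime]

/-- The group ring of `ℤ/p` over the Witt vectors. -/
abbrev Rp : Type := AddMonoidAlgebra (Wp p) (ZMod p)

/-- The element `1 - g` of the group ring, with `g` the generator `1 ∈ ℤ/p`. -/
noncomputable def piR : Rp p := 1 - AddMonoidAlgebra.single 1 1

variable {p}

lemma one_sub_piR_pow (T : ℕ) : (1 - piR p) ^ T = AddMonoidAlgebra.single (T : ZMod p) 1 := by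
  rw [piR, sub_sub_cancel, AddMonoidAlgebra.single_pow, one_pow, nsmul_one]

lemma p_dvd_piR_pow (hodd : Odd p) : (p : Rp p) ∣ piR p ^ p := by
  obtain ⟨r, hr⟩ := exists_add_pow_prime_eq (Fact.out : p.Prime) (1 : Rp p)
    (-AddMonoidAlgebra.single 1 1)
  have h1 : (AddMonoidAlgebra.single 1 1 : Rp p) ^ p = 1 := by
    rw [AddMonoidAlgebra.single_pow, one_pow, nsmul_one, CharP.cast_eq_zero,
      AddMonoidAlgebra.one_def]
  rw [piR, sub_eq_add_neg, hr, hodd.neg_pow, h1, one_pow, add_neg_cancel, zero_add, mul_assoc,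
    mul_assoc]
  exact dvd_mul_right _ _

lemma p_pow_dvd_piR_pow (hodd : Odd p) {M L : ℕ} (h : p * M ≤ L) :
    (p : Rp p) ^ M ∣ piR p ^ L :=
  (pow_dvd_pow_of_dvd (p_dvd_piR_pow hodd) M).trans
    ((pow_mul (piR p) p M) ▸ pow_dvd_pow _ h)

/-- The `i`-th coefficient is divisible by `π ^ i`. -/
def CoeffDvd {R : Type*} [CommRing R] (π : R) (P : R[X]) : Prop := ∀ i, π ^ i ∣ P.coeff i

lemma CoeffDvd.mul {R : Type*} [CommRing R] {π : R} {P Q : R[X]} (hP : CoeffDvd π P)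
    (hQ : CoeffDvd π Q) : CoeffDvd π (P * Q) := by
  intro i
  rw [coeff_mul]
  refine Finset.dvd_sum fun x hx => ?_
  rw [Finset.HasAntidiagonal.mem_antidiagonal] at hx
  rw [← hx, pow_add]
  exact mul_dvd_mul (hP _) (hQ _)

lemma CoeffDvd.one {R : Type*} [CommRing R] (π : R) : CoeffDvd π 1 := by
  intro i
  rw [coeff_one]
  split_ifs with h
  · simp [h]
  · exact dvd_zero _

lemma CoeffDvd.prod {R ι : Type*} [CommRing R] {π : R} (s : Finset ι) {P : ι → R[X]}
    (h : ∀ i ∈ s, CoeffDvd π (P i)) : CoeffDvd π (∏ i ∈ s, P i) :=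
  Finset.prod_induction P (CoeffDvd π) (fun _ _ h₁ h₂ => h₁.mul h₂) (CoeffDvd.one π) h

/-- A splitting function modulo `p ^ M`: the products of its values along the Frobenius orbit of a
Teichmüller point give the additive character `a ↦ g ^ Tr(a)`. -/
lemma exists_splitting (hodd : Odd p) (M : ℕ) : ∃ Θ : (Rp p)[X], CoeffDvd (piR p) Θ ∧
    ∀ (k : ℕ) (x : AlgebraicClosure (ZMod p)) (c : ZMod p), x ^ p ^ k = x →
      algebraMap (ZMod p) (AlgebraicClosure (ZMod p)) c = ∑ i ∈ Finset.range k, x ^ p ^ i →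
      (p : Rp p) ^ M ∣ ∏ i ∈ Finset.range k,
        Θ.eval (algebraMap (Wp p) (Rp p) (WittVector.teichmuller p x ^ p ^ i))
          - AddMonoidAlgebra.single c 1 := by
  have hp : p.Prime := Fact.out
  set J := p * M with hJ
  obtain ⟨e, he⟩ := exists_mul_moebius hp (J + M + 1)
  refine ⟨∏ N ∈ primeToP p J, ∏ l ∈ N.divisors, (1 - C (piR p ^ N) * X ^ l) ^ e N l, ?_, ?_⟩
  · refine CoeffDvd.prod _ fun N hN => CoeffDvd.prod _ fun l hl => ?_
    rw [← Finset.card_range (e N l), ← Finset.prod_const]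
    refine CoeffDvd.prod _ fun _ _ i => ?_
    rw [coeff_sub, coeff_C_mul, coeff_X_pow]
    refine dvd_sub (CoeffDvd.one _ i) ?_
    split_ifs with h
    · rw [mul_one, h]
      exact pow_dvd_pow _ (Nat.divisor_le hl)
    · rw [mul_zero]
      exact dvd_zero _
  · intro k x c hx hc
    set t : Wp p := WittVector.teichmuller p x with ht
    have htk : t ^ p ^ k = t := by rw [ht, ← map_pow, hx]
    have hfrob : WittVector.frobenius (∑ i ∈ Finset.range k, t ^ p ^ i)
        = ∑ i ∈ Finset.range k, t ^ p ^ i := by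
      rw [map_sum]
      have h1 : ∀ i, WittVector.frobenius (t ^ p ^ i) = t ^ p ^ (i + 1) := by
        intro i
        rw [map_pow, ht, Wp.frobenius_teichmuller, ← pow_mul, pow_succ']
      simp only [h1]
      have h2 := Finset.sum_range_succ (fun i => t ^ p ^ i) k
      rw [Finset.sum_range_succ', pow_zero, pow_one, htk] at h2
      exact add_right_cancel h2
    obtain ⟨T, hT⟩ := Wp.exists_nat (J + M + 1) _ hfrob
    have hTc : (T : ZMod p) = c := by
      apply (algebraMap (ZMod p) (AlgebraicClosure (ZMod p))).injective
      rw [map_natCast, hc]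
      have h1 : (p : Wp p) ∣ ∑ i ∈ Finset.range k, t ^ p ^ i - T :=
        (dvd_pow_self _ (by omega)).trans hT
      have h2 := map_dvd WittVector.constantCoeff h1
      rw [map_natCast, CharP.cast_eq_zero, zero_dvd_iff, map_sub, map_natCast, map_sum,
        sub_eq_zero] at h2
      rw [← h2]
      refine Finset.sum_congr rfl fun i _ => ?_
      rw [map_pow, ht, ← Wp.coeff_zero_eq_constantCoeff, WittVector.teichmuller_coeff_zero]
    have hprod : ∏ i ∈ Finset.range k, (∏ N ∈ primeToP p J, ∏ l ∈ N.divisors,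
        (1 - C (piR p ^ N) * X ^ l) ^ e N l).eval (algebraMap (Wp p) (Rp p) (t ^ p ^ i))
        = aeval (piR p) (splitPoly p J e t k) := by
      rw [splitPoly]
      simp only [map_prod, eval_prod, eval_pow, eval_sub, eval_one, eval_mul, eval_C, eval_X,
        map_pow, map_sub, map_one, map_mul, aeval_C, aeval_X]
      refine Finset.prod_congr rfl fun i _ => Finset.prod_congr rfl fun N _ =>
        Finset.prod_congr rfl fun l _ => ?_
      rw [mul_comm]
    have hsing : (AddMonoidAlgebra.single c 1 : Rp p) = aeval (piR p) ((1 - X : (Wp p)[X]) ^ T) := by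
      rw [map_pow, map_sub, map_one, aeval_X, one_sub_piR_pow, hTc]
    rw [hprod, hsing, ← map_sub, aeval_eq_sum_range]
    refine Finset.dvd_sum fun m _ => ?_
    by_cases hm : m < J
    · have h1 := factorial_mul_splitPoly hp he htk hT hm
      rw [add_assoc, ← coeff_sub] at h1
      have h2 := (pow_dvd_pow (p : Wp p) (Nat.le_succ M)).trans (Wp.dvd_of_factorial_mul hm h1)
      rw [Algebra.smul_def]
      refine Dvd.dvd.mul_right ?_ _
      have h3 := map_dvd (algebraMap (Wp p) (Rp p)) h2
      rwa [map_pow, map_natCast] at h3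
    · rw [Algebra.smul_def]
      exact (p_pow_dvd_piR_pow hodd (not_lt.mp hm)).mul_left _

end SplittingRing

end ExpSumDegree

/-! ### The lift of the polynomial -/

namespace ExpSumDegree

section Lifting

variable {p : ℕ} [Fact p.Prime]

lemma dvd_sub_iff_mk {R : Type*} [CommRing R] {x a b : R} :
    x ∣ a - b ↔ Ideal.Quotient.mk (Ideal.span {x}) a = Ideal.Quotient.mk (Ideal.span {x}) b := by
  rw [Ideal.Quotient.eq, Ideal.mem_span_singleton]

/-- The Teichmüller representative, in the group ring, of an element of an algebraic closure. -/
noncomputable def teichR (p : ℕ) [Fact p.Prime] : AlgebraicClosure (ZMod p) →* Rp p :=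
  (algebraMap (Wp p) (Rp p) : Wp p →* Rp p).comp (WittVector.teichmuller p)

lemma teichR_apply (x : AlgebraicClosure (ZMod p)) :
    teichR p x = algebraMap (Wp p) (Rp p) (WittVector.teichmuller p x) := rfl

section CharacterSum

variable {K : Type*} [Field K] [Fintype K] (ι : K →+* AlgebraicClosure (ZMod p))

lemma sum_teichR_pow {k : ℕ} (hcard : Fintype.card K = p ^ k) (u : ℕ) :
    ∑ a : K, teichR p (ι a) ^ u
      = (if p ^ k - 1 ∣ u then ((p ^ k - 1 : ℕ) : Rp p) else 0) + (if u = 0 then 1 else 0) := by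
  classical
  have hpos : 1 ≤ p ^ k := Nat.one_le_pow _ _ (Fact.out : p.Prime).pos
  by_cases hu : u = 0
  · subst hu
    rw [if_pos (dvd_zero _), if_pos rfl]
    simp only [pow_zero, Finset.sum_const, Finset.card_univ, hcard, nsmul_one]
    rw [← Nat.cast_one (R := Rp p), ← Nat.cast_add, Nat.sub_add_cancel hpos]
  rw [if_neg hu, add_zero]
  set h : Kˣ →* Wp p := (powMonoidHom u).comp ((WittVector.teichmuller p).comp
    ((ι : K →* AlgebraicClosure (ZMod p)).comp (Units.coeHom K))) with hh
  have h_apply : ∀ a : Kˣ, h a = WittVector.teichmuller p (ι a) ^ u := fun a => rfl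
  have hone : h = 1 ↔ p ^ k - 1 ∣ u := by
    rw [← hcard, ← FiniteField.forall_pow_eq_one_iff K u, MonoidHom.ext_iff]
    refine forall_congr' fun a => ?_
    rw [h_apply, MonoidHom.one_apply, ← map_pow, ← map_pow]
    constructor
    · intro h1
      have h2 := congrArg (fun w : Wp p => w.coeff 0) h1
      simp only [WittVector.teichmuller_coeff_zero, WittVector.one_coeff_zero] at h2
      rw [← map_one ι] at h2
      exact Units.ext (by simpa using ι.injective h2)
    · intro h1
      rw [← Units.val_pow_eq_pow_val, h1, Units.val_one, map_one, map_one]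
  have hsum : ∑ a : K, WittVector.teichmuller p (ι a) ^ u = ∑ a : Kˣ, h a := by
    rw [← Finset.sum_erase_add _ _ (Finset.mem_univ (0 : K))]
    rw [map_zero, WittVector.teichmuller_zero, zero_pow hu, add_zero]
    symm
    refine Finset.sum_bij (fun a _ => (a : K)) ?_ ?_ ?_ fun a _ => h_apply a
    · intro a _
      simp
    · intro a _ b _ hab
      exact Units.ext hab
    · intro a ha
      exact ⟨Units.mk0 a (Finset.ne_of_mem_erase ha), Finset.mem_univ _, rfl⟩
  have hall : ∑ a : K, teichR p (ι a) ^ u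
      = algebraMap (Wp p) (Rp p) (∑ a : K, WittVector.teichmuller p (ι a) ^ u) := by
    rw [map_sum]
    refine Finset.sum_congr rfl fun a _ => ?_
    rw [teichR_apply, map_pow]
  rw [hall, hsum, sum_hom_units, Fintype.card_units, hcard]
  by_cases hd : p ^ k - 1 ∣ u
  · rw [if_pos hd, if_pos (hone.mpr hd), map_natCast]
  · rw [if_neg hd, if_neg (fun h' => hd (hone.mp h')), Nat.cast_zero, map_zero]

end CharacterSum

variable {n : ℕ}

/-- The lift `∏_m Θ(τ(c_m) x^m)` of the polynomial `f = ∑ c_m x^m`. -/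
noncomputable def dworkLift (Θ : Polynomial (Rp p)) (f : MvPolynomial (Fin n) (ZMod p)) :
    MvPolynomial (Fin n) (Rp p) :=
  ∏ m ∈ f.support, Polynomial.aeval (MvPolynomial.monomial m
    (teichR p (algebraMap (ZMod p) _ (f.coeff m)))) Θ

lemma graded_dworkLift {Θ : Polynomial (Rp p)} (hΘ : CoeffDvd (piR p) Θ)
    (f : MvPolynomial (Fin n) (ZMod p)) :
    Graded (piR p) (f.totalDegree + 1) (dworkLift Θ f) := by
  classical
  refine Graded.prod (Nat.succ_pos _) _ fun m hm w => ?_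
  rw [Polynomial.aeval_eq_sum_range, MvPolynomial.coeff_sum]
  refine Finset.dvd_sum fun i _ => ?_
  rw [MvPolynomial.monomial_pow, MvPolynomial.coeff_smul, MvPolynomial.coeff_monomial]
  split_ifs with h
  · rw [smul_eq_mul]
    refine Dvd.dvd.mul_right ((pow_dvd_pow _ ?_).trans (hΘ i)) _
    rw [← h, map_nsmul, smul_eq_mul, ← Nat.lt_succ_iff, Nat.div_lt_iff_lt_mul (Nat.succ_pos _)]
    have hm' : m.degree ≤ f.totalDegree := MvPolynomial.le_totalDegree hm
    have : i * m.degree ≤ i * (f.totalDegree + 1) := Nat.mul_le_mul_left i (by omega)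
    rw [Nat.succ_mul, Nat.succ_eq_add_one]
    omega
  · rw [smul_zero]
    exact dvd_zero _

variable {K : Type*} [Field K] [Algebra (ZMod p) K]

lemma eval_dworkLift (ι : K →ₐ[ZMod p] AlgebraicClosure (ZMod p)) (Θ : Polynomial (Rp p))
    (f : MvPolynomial (Fin n) (ZMod p)) (a : Fin n → K) (i : ℕ) :
    MvPolynomial.eval (fun j => teichR p (ι (a j)) ^ p ^ i) (dworkLift Θ f)
      = ∏ m ∈ f.support, Θ.eval (algebraMap (Wp p) (Rp p)
          (WittVector.teichmuller p (ι (MvPolynomial.aeval a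
            (MvPolynomial.monomial m (f.coeff m)))) ^ p ^ i)) := by
  rw [dworkLift, map_prod]
  refine Finset.prod_congr rfl fun m _ => ?_
  rw [← MvPolynomial.coe_aeval_eq_eval, RingHom.coe_coe, ← Polynomial.aeval_algHom_apply,
    Polynomial.coe_aeval_eq_eval]
  congr 1
  rw [map_pow, ← teichR_apply, MvPolynomial.aeval_monomial, MvPolynomial.aeval_monomial, map_mul,
    map_mul, mul_pow, AlgHom.commutes, Algebra.algebraMap_self, RingHom.id_apply]
  congr 1
  · rw [← map_pow, ← map_pow, ZMod.pow_card_pow]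
  · rw [Finsupp.prod_fintype _ _ (by simp), Finsupp.prod_fintype _ _ (by simp), map_prod, map_prod,
      ← Finset.prod_pow]
    refine Finset.prod_congr rfl fun j _ => ?_
    rw [map_pow, map_pow, pow_right_comm]

/-- Modulo `p ^ M`, the values of `frobProd` at Teichmüller points are the group elements
`g ^ Tr(f(a))`. -/
lemma eval_frobProd_dworkLift [Finite K] {M : ℕ} {Θ : Polynomial (Rp p)}
    (hΘ : ∀ (k : ℕ) (x : AlgebraicClosure (ZMod p)) (c : ZMod p), x ^ p ^ k = x →
      algebraMap (ZMod p) (AlgebraicClosure (ZMod p)) c = ∑ i ∈ Finset.range k, x ^ p ^ i →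
      (p : Rp p) ^ M ∣ ∏ i ∈ Finset.range k,
        Θ.eval (algebraMap (Wp p) (Rp p) (WittVector.teichmuller p x ^ p ^ i))
          - AddMonoidAlgebra.single c 1)
    {k : ℕ} (hcard : Nat.card K = p ^ k) (hrank : Module.finrank (ZMod p) K = k)
    (ι : K →ₐ[ZMod p] AlgebraicClosure (ZMod p))
    (f : MvPolynomial (Fin n) (ZMod p)) (a : Fin n → K) :
    (p : Rp p) ^ M ∣ MvPolynomial.eval (fun j => teichR p (ι (a j))) (frobProd p (dworkLift Θ f) k)
      - AddMonoidAlgebra.single (Algebra.trace (ZMod p) K (MvPolynomial.aeval a f)) 1 := by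
  classical
  have : Fintype K := Fintype.ofFinite K
  rw [eval_frobProd, Finset.prod_congr rfl fun i _ => eval_dworkLift ι Θ f a i, Finset.prod_comm]
  have hsingle : (AddMonoidAlgebra.single
      (Algebra.trace (ZMod p) K (MvPolynomial.aeval a f)) 1 : Rp p)
      = ∏ m ∈ f.support, AddMonoidAlgebra.single (Algebra.trace (ZMod p) K
          (MvPolynomial.aeval a (MvPolynomial.monomial m (f.coeff m)))) 1 := by
    conv_lhs => rw [f.as_sum, map_sum, map_sum]
    generalize f.support = s
    induction s using Finset.induction_on with
    | empty => simp [AddMonoidAlgebra.one_def]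
    | insert m s hm ih =>
      rw [Finset.sum_insert hm, Finset.prod_insert hm, ← ih, AddMonoidAlgebra.single_mul_single,
        one_mul]
  rw [hsingle, dvd_sub_iff_mk, map_prod, map_prod]
  refine Finset.prod_congr rfl fun m _ => ?_
  rw [← dvd_sub_iff_mk]
  refine hΘ k _ _ ?_ ?_
  · rw [← map_pow, ← hcard, Nat.card_eq_fintype_card, FiniteField.pow_card]
  · have h1 := congrArg ι (FiniteField.algebraMap_trace_eq_sum_pow (ZMod p) K
      (MvPolynomial.aeval a (MvPolynomial.monomial m (f.coeff m))))
    rw [AlgHom.commutes, map_sum, hrank, Nat.card_zmod] at h1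
    rw [h1]
    exact Finset.sum_congr rfl fun i _ => map_pow _ _ _

end Lifting

end ExpSumDegree

/-! ### Vanishing of the Hankel determinants -/

namespace ExpSumDegree

section L1Norm

variable {p : ℕ} [Fact p.Prime]

/-- The sum of the absolute values of the coefficients of an element of `ℤ[ℤ/p]`. -/
def l1 (x : AddMonoidAlgebra ℤ (ZMod p)) : ℤ := ∑ t, |x.coeff t|

lemma l1_nonneg (x : AddMonoidAlgebra ℤ (ZMod p)) : 0 ≤ l1 x :=
  Finset.sum_nonneg fun _ _ => abs_nonneg _

lemma l1_add (x y : AddMonoidAlgebra ℤ (ZMod p)) : l1 (x + y) ≤ l1 x + l1 y := by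
  rw [l1, l1, l1, ← Finset.sum_add_distrib]
  refine Finset.sum_le_sum fun t _ => ?_
  rw [AddMonoidAlgebra.coeff_add, Finsupp.add_apply]
  exact abs_add_le _ _

lemma l1_zero : l1 (0 : AddMonoidAlgebra ℤ (ZMod p)) = 0 := by simp [l1]

lemma l1_neg (x : AddMonoidAlgebra ℤ (ZMod p)) : l1 (-x) = l1 x := by
  simp [l1, AddMonoidAlgebra.coeff_neg]

lemma l1_sum {ι : Type*} (s : Finset ι) (x : ι → AddMonoidAlgebra ℤ (ZMod p)) :
    l1 (∑ i ∈ s, x i) ≤ ∑ i ∈ s, l1 (x i) :=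
  Finset.le_sum_of_subadditive l1 l1_zero.le l1_add s x

lemma l1_single (t : ZMod p) (a : ℤ) : l1 (AddMonoidAlgebra.single t a) = |a| := by
  classical
  rw [l1, Finset.sum_eq_single t]
  · simp [AddMonoidAlgebra.coeff_single]
  · intro s _ hs
    simp [AddMonoidAlgebra.coeff_single, hs.symm]
  · simp

lemma l1_single_mul (t : ZMod p) (a : ℤ) (y : AddMonoidAlgebra ℤ (ZMod p)) :
    l1 (AddMonoidAlgebra.single t a * y) = |a| * l1 y := by
  rw [l1, l1, Finset.mul_sum,
    ← Equiv.sum_comp (Equiv.addLeft t) fun s => |(AddMonoidAlgebra.single t a * y).coeff s|]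
  refine Finset.sum_congr rfl fun s _ => ?_
  rw [Equiv.coe_addLeft,
    AddMonoidAlgebra.coeff_single_mul_eq_mul_coeff (m₂ := s) (by simp), abs_mul]

lemma l1_mul (x y : AddMonoidAlgebra ℤ (ZMod p)) : l1 (x * y) ≤ l1 x * l1 y := by
  have hx : x = ∑ t, AddMonoidAlgebra.single t (x.coeff t) := by
    conv_lhs => rw [← x.sum_coeff_single]
    exact Finsupp.sum_fintype _ _ (by simp)
  calc l1 (x * y) = l1 (∑ t, AddMonoidAlgebra.single t (x.coeff t) * y) := by
        rw [← Finset.sum_mul, ← hx]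
    _ ≤ ∑ t, l1 (AddMonoidAlgebra.single t (x.coeff t) * y) := l1_sum _ _
    _ = l1 x * l1 y := by
        simp only [l1_single_mul]
        rw [← Finset.sum_mul]
        rfl

lemma l1_prod {ι : Type*} (s : Finset ι) (x : ι → AddMonoidAlgebra ℤ (ZMod p)) {B : ℤ}
    (h : ∀ i ∈ s, l1 (x i) ≤ B) : l1 (∏ i ∈ s, x i) ≤ B ^ s.card := by
  classical
  induction s using Finset.induction_on with
  | empty =>
    rw [Finset.prod_empty, AddMonoidAlgebra.one_def, l1_single]
    simp
  | insert i s hi ih =>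
    rw [Finset.prod_insert hi, Finset.card_insert_of_notMem hi, pow_succ']
    have h1 := h i (Finset.mem_insert_self i s)
    exact (l1_mul _ _).trans (mul_le_mul h1 (ih fun j hj => h j (Finset.mem_insert_of_mem hj))
      (l1_nonneg _) ((l1_nonneg _).trans h1))

lemma l1_det {m : ℕ} (A : Matrix (Fin m) (Fin m) (AddMonoidAlgebra ℤ (ZMod p))) {B : ℤ}
    (h : ∀ i j, l1 (A i j) ≤ B) : l1 A.det ≤ m.factorial * B ^ m := by
  rw [Matrix.det_apply]
  refine (l1_sum _ _).trans ?_
  have hterm : ∀ σ : Equiv.Perm (Fin m), l1 (Equiv.Perm.sign σ • ∏ i, A (σ i) i) ≤ B ^ m := by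
    intro σ
    have h1 : l1 (∏ i, A (σ i) i) ≤ B ^ m := by
      simpa using l1_prod Finset.univ (fun i => A (σ i) i) fun i _ => h _ _
    rcases Int.units_eq_one_or (Equiv.Perm.sign σ) with h2 | h2
    · rwa [h2, one_smul]
    · rwa [h2, Units.neg_smul, one_smul, l1_neg]
  refine (Finset.sum_le_card_nsmul _ _ _ fun σ _ => hterm σ).trans (le_of_eq ?_)
  rw [Finset.card_univ, Fintype.card_perm, Fintype.card_fin, nsmul_eq_mul]

lemma eq_zero_of_l1_lt {x : AddMonoidAlgebra ℤ (ZMod p)} {N : ℤ} (h : ∀ t, N ∣ x.coeff t)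
    (hN : l1 x < N) : x = 0 := by
  ext t
  have h1 : |x.coeff t| ≤ l1 x :=
    Finset.single_le_sum (f := fun t => |x.coeff t|) (fun _ _ => abs_nonneg _) (Finset.mem_univ t)
  rw [AddMonoidAlgebra.coeff_zero, Finsupp.zero_apply]
  exact Int.eq_zero_of_abs_lt_dvd (h t) (h1.trans_lt hN)

end L1Norm

section Rationality

variable {p : ℕ} [Fact p.Prime] {n : ℕ}

noncomputable instance (k : ℕ) : Fintype (GaloisField p k) := Fintype.ofFinite _

/-- The universal exponential sum `∑_x g ^ Tr(f(x))` in the group ring `ℤ[ℤ/p]`. -/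
noncomputable def expSeq (f : MvPolynomial (Fin n) (ZMod p)) (k : ℕ) :
    AddMonoidAlgebra ℤ (ZMod p) :=
  ∑ x : Fin n → GaloisField p k, AddMonoidAlgebra.single
    (Algebra.trace (ZMod p) (GaloisField p k) (MvPolynomial.aeval x f)) 1

lemma card_galoisField {k : ℕ} (hk : 1 ≤ k) : Fintype.card (GaloisField p k) = p ^ k := by
  rw [← Nat.card_eq_fintype_card, GaloisField.card p k (by omega)]

lemma l1_expSeq (f : MvPolynomial (Fin n) (ZMod p)) {k : ℕ} (hk : 1 ≤ k) :
    l1 (expSeq f k) ≤ (p : ℤ) ^ (k * n) := by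
  refine (l1_sum _ _).trans (le_of_eq ?_)
  simp only [l1_single, abs_one, Finset.sum_const, Finset.card_univ, nsmul_one]
  rw [Fintype.card_pi]
  simp only [Finset.prod_const, Finset.card_univ, Fintype.card_fin]
  rw [card_galoisField hk]
  push_cast
  rw [pow_mul]

/-- Base change from `ℤ[ℤ/p]` to the group ring over the Witt vectors. -/
noncomputable def toRp (p : ℕ) [Fact p.Prime] : AddMonoidAlgebra ℤ (ZMod p) →+* Rp p :=
  AddMonoidAlgebra.mapRingHom (ZMod p) (Int.castRingHom (Wp p))

lemma toRp_coeff (x : AddMonoidAlgebra ℤ (ZMod p)) (t : ZMod p) :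
    (toRp p x).coeff t = ((x.coeff t : ℤ) : Wp p) := by
  simp [toRp]

lemma Wp.dvd_of_dvd_intCast (M : ℕ) : ∀ z : ℤ, (p : Wp p) ^ M ∣ (z : Wp p) → (p : ℤ) ^ M ∣ z := by
  induction M with
  | zero => simp
  | succ M ih =>
    intro z hz
    have h1 : (p : ℤ) ∣ z := by
      have h2 := map_dvd WittVector.constantCoeff ((dvd_pow_self (p : Wp p) (by omega)).trans hz)
      rw [map_natCast, CharP.cast_eq_zero, zero_dvd_iff, map_intCast] at h2
      exact (CharP.intCast_eq_zero_iff _ p z).mp h2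
    obtain ⟨y, rfl⟩ := h1
    rw [pow_succ']
    refine mul_dvd_mul_left _ (ih y ?_)
    rw [pow_succ', Int.cast_mul, Int.cast_natCast] at hz
    exact (mul_dvd_mul_iff_left Wp.p_ne_zero).mp hz

lemma dvd_coeff_of_dvd_toRp {M : ℕ} {x : AddMonoidAlgebra ℤ (ZMod p)}
    (h : (p : Rp p) ^ M ∣ toRp p x) (t : ZMod p) : (p : ℤ) ^ M ∣ x.coeff t := by
  obtain ⟨y, hy⟩ := h
  refine Wp.dvd_of_dvd_intCast M _ ⟨y.coeff t, ?_⟩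
  have h1 : (p : Rp p) ^ M * y = (p ^ M : ℕ) • y := by rw [nsmul_eq_mul, Nat.cast_pow]
  rw [← toRp_coeff, hy, h1, AddMonoidAlgebra.coeff_smul, Finsupp.smul_apply, nsmul_eq_mul,
    Nat.cast_pow]

/-- The constant `b` controlling the decay for the polynomial `f` at rate `c`. -/
def decayConst (f : MvPolynomial (Fin n) (ZMod p)) (c : ℕ) : ℕ :=
  2 ^ n * ((n + 1) * (c * (c * (f.totalDegree + 1)) ^ n))

/-- The sums over the fields `K k` of the values of `frobProd` at Teichmüller points satisfy the
decay condition, for every rate `c`. -/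
lemma decay_sum_teichR {K : ℕ → Type} [∀ k, Field (K k)] [∀ k, Fintype (K k)]
    (hcard : ∀ k, 1 ≤ k → Fintype.card (K k) = p ^ k)
    (ι : ∀ k, K k →+* AlgebraicClosure (ZMod p)) {Θ : Polynomial (Rp p)}
    (hΘ : CoeffDvd (piR p) Θ) (f : MvPolynomial (Fin n) (ZMod p)) (c : ℕ) :
    Decay (piR p) c (decayConst f c) (fun k => ∑ a : Fin n → K k,
      MvPolynomial.eval (fun j => teichR p (ι k (a j))) (frobProd p (dworkLift Θ f) k)) := by
  have hp : p.Prime := Fact.out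
  have key : ∀ k, 1 ≤ k → ∀ B,
      (∀ m, MvPolynomial.coeff m (dworkLift Θ f) ≠ 0 → ∀ i, m i ≤ (p - 1) * B) →
      ∑ a : Fin n → K k,
        MvPolynomial.eval (fun j => teichR p (ι k (a j))) (frobProd p (dworkLift Θ f) k)
      = ∑ I : Finset (Fin n), ((p ^ k - 1 : ℕ) : Rp p) ^ I.card
          * (dworkMatrix p (dworkLift Θ f) B I ^ k).trace := by
    intro k hk B hB
    have hτ := sum_teichR_pow (ι k) (hcard k hk)
    generalize dworkLift Θ f = F at hB ⊢
    exact sum_eval_frobProd (τ := fun a => teichR p (ι k a)) hp.two_le hk hB hτ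
  have hg := graded_dworkLift hΘ f
  generalize dworkLift Θ f = F at key hg ⊢
  exact decay_frobProd_sum hp.two_le (Nat.succ_pos _) c hg _ key

/-- The congruence modulo `p ^ M` between the universal sums and the sums of the Dwork lift, whose
Hankel determinants are divisible by a high power of `π`. -/
lemma dvd_hankel_expSeq (hodd : Odd p) (f : MvPolynomial (Fin n) (ZMod p)) (c m M : ℕ)
    (hM : p * M ≤ ∑ i ∈ Finset.range m, (c * i - decayConst f c)) (t : ZMod p) :
    (p : ℤ) ^ M ∣ (hankel (expSeq f) 1 m).det.coeff t := by
  classical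
  refine dvd_coeff_of_dvd_toRp ?_ t
  obtain ⟨Θ, hΘ, hsplit⟩ := exists_splitting hodd M
  have ι : ∀ k, GaloisField p k →ₐ[ZMod p] AlgebraicClosure (ZMod p) := fun k =>
    IsAlgClosed.lift
  have hdecay := decay_sum_teichR (K := GaloisField p) (fun k hk => card_galoisField hk)
    (fun k => (ι k : GaloisField p k →+* AlgebraicClosure (ZMod p))) hΘ f c
  have hcongr : ∀ k, 1 ≤ k → (p : Rp p) ^ M ∣ (∑ a : Fin n → GaloisField p k,
      MvPolynomial.eval (fun j => teichR p ((ι k : GaloisField p k →+* _) (a j)))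
        (frobProd p (dworkLift Θ f) k)) - toRp p (expSeq f k) := by
    intro k hk
    rw [expSeq, map_sum, ← Finset.sum_sub_distrib]
    refine Finset.dvd_sum fun a _ => ?_
    have h1 := eval_frobProd_dworkLift hsplit (GaloisField.card p k (by omega))
      (GaloisField.finrank p (by omega)) (ι k) f a
    rw [toRp, AddMonoidAlgebra.mapRingHom_single, map_one]
    exact h1
  obtain ⟨S, hdecay, hcongr⟩ : ∃ S : ℕ → Rp p, Decay (piR p) c (decayConst f c) S ∧
      ∀ k, 1 ≤ k → (p : Rp p) ^ M ∣ S k - toRp p (expSeq f k) := ⟨_, hdecay, hcongr⟩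
  have hdet : (p : Rp p) ^ M ∣ (hankel S 1 m).det - toRp p (hankel (expSeq f) 1 m).det := by
    rw [dvd_sub_iff_mk, RingHom.map_det, RingHom.map_det, RingHom.map_det]
    congr 1
    ext i j
    simp only [RingHom.mapMatrix_apply, Matrix.map_apply, hankel, Matrix.of_apply]
    rw [← dvd_sub_iff_mk]
    exact hcongr _ (by omega)
  have h1 := (p_pow_dvd_piR_pow hodd hM).trans (hdecay.dvd_hankel_det m)
  exact (dvd_sub_right h1).mp hdet

lemma sum_trunc_ge (c b m : ℕ) :
    c * (m * (m - 1)) ≤ 2 * ∑ i ∈ Finset.range m, (c * i - b) + 2 * (b * m) := by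
  have h1 : c * ∑ i ∈ Finset.range m, i ≤ ∑ i ∈ Finset.range m, (c * i - b) + b * m := by
    rw [Finset.mul_sum]
    calc ∑ i ∈ Finset.range m, c * i ≤ ∑ i ∈ Finset.range m, ((c * i - b) + b) :=
          Finset.sum_le_sum fun i _ => by omega
      _ = _ := by
          rw [Finset.sum_add_distrib, Finset.sum_const, Finset.card_range, smul_eq_mul, mul_comm b]
  have h2 := Finset.sum_range_id_mul_two m
  calc c * (m * (m - 1)) = 2 * (c * ∑ i ∈ Finset.range m, i) := by rw [← h2]; ring
    _ ≤ _ := by omega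

/-- The Hankel determinants of the universal exponential sums vanish from some size on: their
`p`-adic valuation outgrows their archimedean size. -/
lemma hankel_expSeq_eq_zero (hodd : Odd p) (f : MvPolynomial (Fin n) (ZMod p)) :
    ∃ m₀, ∀ m ≥ m₀, (hankel (expSeq f) 1 m).det = 0 := by
  have hp : p.Prime := Fact.out
  -- With this `c` the exponent, at least `c m (m - 1) / 2 - b m`, exceeds `p` times the exponent
  -- `(2 n + 1) m ^ 2` in the archimedean bound.
  set c := 4 * (p * (2 * n + 2)) with hc
  set b := decayConst f c with hb
  refine ⟨b + 2, fun m hm => ?_⟩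
  set M := (2 * n + 1) * m ^ 2 + 1 with hMdef
  have hM : p * M ≤ ∑ i ∈ Finset.range m, (c * i - b) := by
    have h1 := sum_trunc_ge c b m
    obtain ⟨r, rfl⟩ : ∃ r, m = b + 2 + r := ⟨m - (b + 2), by omega⟩
    have hp2 := hp.two_le
    generalize ∑ i ∈ Finset.range (b + 2 + r), (c * i - b) = Q at h1 ⊢
    have h2 : b + 2 + r - 1 = b + 1 + r := by omega
    rw [h2] at h1
    have h3 : b * (b + 2 + r) + p ≤ p * (b + 2 + r) ^ 2 := by
      have h6 : b * (b + 2 + r) + 1 ≤ (b + 2 + r) ^ 2 := by nlinarith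
      calc b * (b + 2 + r) + p ≤ p * (b * (b + 2 + r)) + p :=
            Nat.add_le_add_right (Nat.le_mul_of_pos_left _ hp.pos) _
        _ = p * (b * (b + 2 + r) + 1) := by ring
        _ ≤ _ := Nat.mul_le_mul_left p h6
    have h4 : (b + 2 + r) ^ 2 ≤ 2 * ((b + 2 + r) * (b + 1 + r)) := by nlinarith
    have h5 := Nat.mul_le_mul_left (p * (2 * n + 2)) h4
    rw [hMdef]
    rw [hc] at h1
    nlinarith
  refine eq_zero_of_l1_lt (N := (p : ℤ) ^ M) (dvd_hankel_expSeq hodd f c m M hM) ?_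
  have hp1 : (1 : ℤ) ≤ p := by exact_mod_cast hp.one_le
  have hdet := l1_det (hankel (expSeq f) 1 m) (B := (p : ℤ) ^ (2 * m * n)) (by
    intro i j
    rw [hankel, Matrix.of_apply]
    refine (l1_expSeq f (by omega)).trans (pow_le_pow_right₀ hp1 (Nat.mul_le_mul_right n ?_))
    have := i.isLt
    have := j.isLt
    omega)
  have hfact : ((m.factorial : ℕ) : ℤ) ≤ (p : ℤ) ^ (m ^ 2) := by
    have h1 : m.factorial ≤ p ^ (m ^ 2) := by
      refine (Nat.factorial_le_pow m).trans ?_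
      rw [sq, pow_mul]
      exact Nat.pow_le_pow_left (Nat.lt_pow_self hp.one_lt).le m
    exact_mod_cast h1
  calc l1 (hankel (expSeq f) 1 m).det
      ≤ (m.factorial : ℤ) * ((p : ℤ) ^ (2 * m * n)) ^ m := hdet
    _ ≤ (p : ℤ) ^ (m ^ 2) * ((p : ℤ) ^ (2 * m * n)) ^ m := by gcongr
    _ = (p : ℤ) ^ ((2 * n + 1) * m ^ 2) := by
        rw [← pow_mul, ← pow_add]
        congr 1
        ring
    _ < (p : ℤ) ^ M := by
        refine pow_lt_pow_right₀ ?_ (Nat.lt_succ_self _)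
        exact_mod_cast hp.one_lt

lemma chi_expSeq {ζ : ℂ} (hζ : ζ ^ p = 1) (f : MvPolynomial (Fin n) (ZMod p)) (k : ℕ) :
    chi hζ 1 (expSeq f k) = ∑ᶠ x : Fin n → GaloisField p k,
      ζ ^ (Algebra.trace (ZMod p) (GaloisField p k) (MvPolynomial.aeval x f)).val := by
  classical
  rw [finsum_eq_sum_of_fintype, expSeq, map_sum]
  refine Finset.sum_congr rfl fun x _ => ?_
  rw [chi_apply, Finset.sum_eq_single
    (Algebra.trace (ZMod p) (GaloisField p k) (MvPolynomial.aeval x f))]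
  · simp [AddMonoidAlgebra.coeff_single]
  · intro t _ ht
    simp [AddMonoidAlgebra.coeff_single, ht.symm]
  · simp

end Rationality

end ExpSumDegree

open scoped BigOperators

/-- For an odd prime `p`, a primitive `p`-th root of unity `ζ ∈ ℂ`, and a
polynomial `f ∈ 𝔽_p[x₁, …, xₙ]`, the degree sequence `[ℚ(S_k(f)) : ℚ]` of the
exponential sums
`S_k(f) = ∑_{x ∈ (𝔽_{p^k})ⁿ} ζ^{Tr_k(f(x))}` is virtually periodic in `k`
(the sum is a `finsum` over the finite type `(𝔽_{p^k})ⁿ`). -/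
theorem expSum_degree_virtually_periodic (p : ℕ) [Fact p.Prime] (hodd : Odd p)
    (ζ : ℂ) (hζ : IsPrimitiveRoot ζ p) (n : ℕ) (hn : 1 ≤ n)
    (f : MvPolynomial (Fin n) (ZMod p))
    (S : ℕ → ℂ)
    (hS : ∀ k, 1 ≤ k → S k =
      ∑ᶠ x : Fin n → GaloisField p k,
        ζ ^ (Algebra.trace (ZMod p) (GaloisField p k)
              (MvPolynomial.aeval x f)).val) :
    ∃ N r : ℕ, 0 < N ∧ 0 < r ∧ ∀ k > N,
      Module.finrank ℚ ↥(IntermediateField.adjoin ℚ {S (k + r)}) =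
        Module.finrank ℚ ↥(IntermediateField.adjoin ℚ {S k}) := by
  obtain ⟨m₀, hm₀⟩ := ExpSumDegree.hankel_expSeq_eq_zero hodd f
  obtain ⟨N, r, hN, hr, h⟩ := ExpSumDegree.degree_periodic_of_hankel hζ hm₀
  refine ⟨N, r, hN, hr, fun k hk => ?_⟩
  rw [hS k (by omega), hS (k + r) (by omega), ← ExpSumDegree.chi_expSeq hζ.pow_eq_one,
    ← ExpSumDegree.chi_expSeq hζ.pow_eq_one]
  exact h k hk
end

section
/- Let p be an odd prime, let ζ_p ∈ ℂ be a primitive p-th root of unity, let n ≥ 1, and let a ∈ F_p with a ≠ 0. For each k ≥ 1, define the n-dimensional Kloosterman sum Kl_k(n,a) = ∑_{(x_1,…,x_n) ∈ (F_{p^k}^*)^n} ζ_p^{Tr_k(x_1 + x_2 + … + x_n + a/(x_1 x_2 ⋯ x_n))} ∈ ℂ, where Tr_k : F_{p^k} → F_p is the absolute trace map. Then for every k ≥ 1, the degree [ℚ(Kl_k(n,a)) : ℚ] divides (p−1)/gcd(n+1, p−1). -/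
/-!
Write `L = ℚ(ζ)`, whose Galois group over `ℚ` is `(ℤ/p)ˣ`, a unit `t` acting by `ζ ↦ ζ ^ t`.
If `t ^ (n + 1) = 1`, the substitution `x ↦ t x` turns `x₁ + ⋯ + xₙ + a / (x₁ ⋯ xₙ)` into `t` times
itself, because `t ^ (-n) = t`; as the trace is `𝔽_p`-linear, the automorphism attached to `t` just
permutes the terms of the Kloosterman sum (`kloosterman_sum_twist`). The sum therefore lies in the
fixed field of the `(n + 1)`-torsion subgroup of the cyclic group `(ℤ/p)ˣ`. The index of that
subgroup, which is the degree of its fixed field, is `(p - 1) / gcd (n + 1, p - 1)`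
(`finrank_fixedField_torsion`), and degrees are multiplicative in towers.
-/

open scoped BigOperators

/-- Raising the root of unity to the power `t` leaves the Kloosterman sum unchanged when
`t ^ (n + 1) = 1`. -/
lemma kloosterman_sum_twist {p : ℕ} [Fact p.Prime] {F R : Type*} [Field F] [Finite F]
    [Algebra (ZMod p) F] [CommRing R] {z : R} (hz : z ^ p = 1) (n : ℕ) (a : ZMod p)
    (t : (ZMod p)ˣ) (ht : t ^ (n + 1) = 1) :
    ∑ᶠ x : Fin n → Fˣ, (z ^ (t : ZMod p).val) ^ (Algebra.trace (ZMod p) F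
        ((∑ i, (x i : F)) + algebraMap (ZMod p) F a / ∏ i, (x i : F))).val =
    ∑ᶠ x : Fin n → Fˣ, z ^ (Algebra.trace (ZMod p) F
        ((∑ i, (x i : F)) + algebraMap (ZMod p) F a / ∏ i, (x i : F))).val := by
  let s : Fˣ := Units.map (algebraMap (ZMod p) F : ZMod p →* F) t
  have hs : (s : F) = algebraMap (ZMod p) F t := rfl
  have hs1 : (s : F) ^ (n + 1) = 1 := by
    rw [hs, ← map_pow, ← Units.val_pow_eq_pow_val, ht, Units.val_one, map_one]
  have key : ∀ x : Fin n → Fˣ,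
      (∑ i, ((Equiv.mulLeft (fun _ => s) x i : Fˣ) : F)) +
        algebraMap (ZMod p) F a / ∏ i, ((Equiv.mulLeft (fun _ => s) x i : Fˣ) : F) =
      (t : ZMod p) • ((∑ i, (x i : F)) + algebraMap (ZMod p) F a / ∏ i, (x i : F)) := by
    intro x
    have hP : ∏ i, (x i : F) ≠ 0 := Finset.prod_ne_zero_iff.mpr fun i _ => (x i).ne_zero
    have hs0 : (s : F) ^ n ≠ 0 := pow_ne_zero _ s.ne_zero
    simp only [Equiv.coe_mulLeft, Pi.mul_apply, Units.val_mul, Finset.prod_mul_distrib,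
      Finset.prod_const, Finset.card_univ, Fintype.card_fin, ← Finset.mul_sum,
      Algebra.smul_def, ← hs, mul_add]
    congr 1
    rw [← mul_div_assoc, div_eq_div_iff (mul_ne_zero hs0 hP) hP]
    linear_combination (-(algebraMap (ZMod p) F a * ∏ i, (x i : F))) * hs1
  symm
  rw [← finsum_comp_equiv (Equiv.mulLeft (fun _ : Fin n => s))]
  refine finsum_congr fun x => ?_
  -- exponents of `z` only matter modulo `p`
  rw [key, map_smul, smul_eq_mul, ZMod.val_mul, ← pow_mul, ← pow_eq_pow_mod _ hz]

/-- The degree over `ℚ` of the subfield of `ℚ(ζ_p)` fixed by the automorphisms `ζ ↦ ζ ^ t` with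
`t ^ d = 1`. -/
lemma finrank_fixedField_torsion (p : ℕ) [Fact p.Prime] (L : Type*) [Field L] [NumberField L]
    [IsCyclotomicExtension {p} ℚ L] (d : ℕ) :
    Module.finrank ℚ (IntermediateField.fixedField
      ((powMonoidHom d : (ZMod p)ˣ →* (ZMod p)ˣ).ker.comap
        (IsCyclotomicExtension.Rat.galEquivZMod p L).toMonoidHom)) =
      (p - 1) / Nat.gcd d (p - 1) := by
  have : IsGalois ℚ L := IsCyclotomicExtension.isGalois {p} ℚ L
  rw [IntermediateField.finrank_eq_fixingSubgroup_index,
    IntermediateField.fixingSubgroup_fixedField,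
    Subgroup.index_comap_of_surjective _ (MulEquiv.surjective _),
    IsCyclic.index_powMonoidHom_ker, Nat.card_eq_fintype_card, ZMod.card_units, Nat.gcd_comm]

/-- For an odd prime `p`, a primitive `p`-th root of unity `ζ ∈ ℂ`, `n ≥ 1` and
`a ∈ 𝔽_p`, `a ≠ 0`, the degree over `ℚ` of the `n`-dimensional Kloosterman sum
`Kl_k(n,a) = ∑_{x ∈ (𝔽_{p^k}^*)ⁿ} ζ^{Tr_k(x₁ + ⋯ + xₙ + a/(x₁⋯xₙ))}`
divides `(p-1)/gcd(n+1, p-1)` for every `k ≥ 1`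
(the sum is a `finsum` over the finite type `(𝔽_{p^k}^*)ⁿ`). -/
theorem kloosterman_degree_dvd (p : ℕ) [Fact p.Prime] (hodd : Odd p)
    (ζ : ℂ) (hζ : IsPrimitiveRoot ζ p) (n : ℕ) (hn : 1 ≤ n)
    (a : ZMod p) (ha : a ≠ 0)
    (Kl : ℕ → ℂ)
    (hKl : ∀ k, 1 ≤ k → Kl k =
      ∑ᶠ x : Fin n → (GaloisField p k)ˣ,
        ζ ^ (Algebra.trace (ZMod p) (GaloisField p k)
              ((∑ i : Fin n, ((x i : GaloisField p k))) +
                algebraMap (ZMod p) (GaloisField p k) a /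
                  ∏ i : Fin n, ((x i : GaloisField p k)))).val) :
    ∀ k, 1 ≤ k →
      Module.finrank ℚ ↥(IntermediateField.adjoin ℚ {Kl k}) ∣
        (p - 1) / Nat.gcd (n + 1) (p - 1) := by
  intro k hk
  let L := IntermediateField.adjoin ℚ {ζ}
  have hint : IsIntegral ℚ ζ := (hζ.isIntegral (NeZero.pos p)).tower_top
  have hcyc : IsCyclotomicExtension {p} ℚ L := by
    change IsCyclotomicExtension {p} ℚ (IntermediateField.adjoin ℚ {ζ}).toSubalgebra
    rw [IntermediateField.adjoin_simple_toSubalgebra_of_isAlgebraic hint.isAlgebraic]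
    exact hζ.adjoin_isCyclotomicExtension ℚ
  have hnf : NumberField L := IsCyclotomicExtension.numberField {p} ℚ L
  let z : L := ⟨ζ, IntermediateField.mem_adjoin_simple_self ℚ ζ⟩
  have hz : z ^ p = 1 := Subtype.ext hζ.pow_eq_one
  let K : L := ∑ᶠ x : Fin n → (GaloisField p k)ˣ,
        z ^ (Algebra.trace (ZMod p) (GaloisField p k)
              ((∑ i : Fin n, ((x i : GaloisField p k))) +
                algebraMap (ZMod p) (GaloisField p k) a /
                  ∏ i : Fin n, ((x i : GaloisField p k)))).val
  have hK : (K : ℂ) = Kl k := by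
    rw [hKl k hk]
    exact (L.val : L →+ ℂ).map_finsum (Set.toFinite _)
  let E := IntermediateField.fixedField
      ((powMonoidHom (n + 1) : (ZMod p)ˣ →* (ZMod p)ˣ).ker.comap
        (IsCyclotomicExtension.Rat.galEquivZMod p L).toMonoidHom)
  have hKE : K ∈ E := by
    rw [IntermediateField.mem_fixedField_iff]
    intro σ hσ
    have ht : (IsCyclotomicExtension.Rat.galEquivZMod p L σ) ^ (n + 1) = 1 := hσ
    refine Eq.trans ?_ (kloosterman_sum_twist (F := GaloisField p k) hz n a _ ht)
    rw [← IsCyclotomicExtension.Rat.galEquivZMod_apply_of_pow_eq p L σ hz]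
    refine ((σ : L →+ L).map_finsum (Set.toFinite _)).trans (finsum_congr fun x => ?_)
    exact map_pow σ _ _
  rw [← finrank_fixedField_torsion p L (n + 1), ← hK, ← IntermediateField.lift_adjoin_simple,
    ← (IntermediateField.liftAlgEquiv _).toLinearEquiv.finrank_eq]
  exact IntermediateField.finrank_dvd_of_le_right
    (IntermediateField.adjoin_simple_le_iff.mpr hKE)
end
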